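/- (Theorem 19) Let 0 < θ₀ < θ₁ < 1, 0 < q₁, r₀, r₁, r ≤ ∞, a, a₁, b₀, b₁ ∈ SV, and ‖s^{-1/r₁} b₁(s)/a₁(s)‖_{r₁,(0,1)} < ∞. Put c₁(t) = a₁(t) ‖s^{-1/r₁} b₁(s)/a₁(s)‖_{r₁,(0,t)} and ρ(t) = t^{θ₁-θ₀} b₀(t)/c₁(t). (i) If 0 < θ < 1 then (Ā_{θ₀,r₀;b₀}, Ā^𝓡_{θ₁,r₁,b₁,q₁,a₁})_{θ,r;a} ≅ Ā_{η,r;a^#}, where η = (1-θ)θ₀ + θθ₁ and a^#(t) ≈ b₀(t)^{1-θ} c₁(t)^θ a(ρ(t)). (ii) If additionally ‖s^{-1/r} a(s)‖_{r,(1,∞)} < ∞, then (Ā_{θ₀,r₀;b₀}, Ā^𝓡_{θ₁,r₁,b₁,q₁,a₁})_{0,r;a} ≅ Ā^𝓛_{θ₀,r,a^#,r₀,b₀}, where a^#(t) ≈ b₀(t) a(ρ(t)). -/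

import Mathlib

open MeasureTheory Set ENNReal Filter

noncomputable section

/-- The `L_q` quasi-norm (with respect to Lebesgue measure) of an `ℝ≥0∞`-valued
function over a set of reals; for `q = ∞` it is the essential supremum. -/
def LqNorm (q : ℝ≥0∞) (s : Set ℝ) (g : ℝ → ℝ≥0∞) : ℝ≥0∞ :=
  if q = ∞ then essSup g (volume.restrict s)
  else (∫⁻ t in s, g t ^ q.toReal) ^ q⁻¹.toReal

/-- The weight `s ↦ s ^ (-1/r) * b s`, as an `ℝ≥0∞`-valued function
(`1/∞ = 0` by convention). -/
def svWgt (r : ℝ≥0∞) (b : ℝ → ℝ) : ℝ → ℝ≥0∞ :=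
  fun s => ENNReal.ofReal (s ^ (-(r⁻¹.toReal)) * b s)

/-- `f` and `g` are equivalent on `s`: each is bounded by a constant multiple
of the other there. -/
def EquivOn (s : Set ℝ) (f g : ℝ → ℝ) : Prop :=
  ∃ C : ℝ, 0 < C ∧ ∀ t ∈ s, C⁻¹ * g t ≤ f t ∧ f t ≤ C * g t

/-- A positive measurable function `b` on `(0,∞)` is slowly varying if for every
`ε > 0`, `t ^ ε * b t` is equivalent to a non-decreasing function and
`t ^ (-ε) * b t` is equivalent to a non-increasing function. -/
def SlowlyVarying (b : ℝ → ℝ) : Prop :=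
  AEMeasurable b (volume.restrict (Ioi 0)) ∧ (∀ t ∈ Ioi (0:ℝ), 0 < b t) ∧
    ∀ ε : ℝ, 0 < ε →
      (∃ g : ℝ → ℝ, MonotoneOn g (Ioi 0) ∧ EquivOn (Ioi 0) (fun t => t ^ ε * b t) g) ∧
      (∃ g : ℝ → ℝ, AntitoneOn g (Ioi 0) ∧ EquivOn (Ioi 0) (fun t => t ^ (-ε) * b t) g)

/-- A quasi-Banach space continuously embedded into the ambient (Hausdorff) space `E`,
recorded via its extended-real-valued quasi-norm; the space itself is the set of
vectors of finite quasi-norm. -/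
structure QuasiBanach (E : Type*) [AddCommGroup E] [Module ℝ E] where
  N : E → ℝ≥0∞
  zero : N 0 = 0
  definite : ∀ x, N x = 0 → x = 0
  smul : ∀ (c : ℝ) (x : E), N (c • x) = ENNReal.ofReal |c| * N x
  quasi : ∃ C : ℝ≥0∞, 1 ≤ C ∧ C ≠ ∞ ∧ ∀ x y, N (x + y) ≤ C * (N x + N y)
  complete : ∀ f : ℕ → E,
    (∀ ε : ℝ≥0∞, 0 < ε → ∃ M : ℕ, ∀ m ≥ M, ∀ n ≥ M, N (f m - f n) < ε) →
    (∀ n, N (f n) ≠ ∞) →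
    ∃ g : E, N g ≠ ∞ ∧ Tendsto (fun n => N (f n - g)) atTop (nhds 0)

variable {E : Type*} [AddCommGroup E] [Module ℝ E]

/-- The Peetre K-functional of the couple whose quasi-norms are `N₀`, `N₁`. -/
def Kf (N₀ N₁ : E → ℝ≥0∞) (t : ℝ) (f : E) : ℝ≥0∞ :=
  ⨅ g : E, N₀ g + ENNReal.ofReal t * N₁ (f - g)

/-- The quasi-norm of the real interpolation space `Ā_{θ,q;b}`. -/
def normK (N₀ N₁ : E → ℝ≥0∞) (θ : ℝ) (q : ℝ≥0∞) (b : ℝ → ℝ) (f : E) : ℝ≥0∞ :=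
  LqNorm q (Ioi 0) fun u =>
    ENNReal.ofReal (u ^ (-θ - q⁻¹.toReal) * b u) * Kf N₀ N₁ u f

/-- The quasi-norm of the limiting interpolation space `Ā^𝓛_{σ,r,b,q,a}`. -/
def normL (N₀ N₁ : E → ℝ≥0∞) (σ : ℝ) (r q : ℝ≥0∞) (b a : ℝ → ℝ) (f : E) : ℝ≥0∞ :=
  LqNorm r (Ioi 0) fun t =>
    ENNReal.ofReal (t ^ (-(r⁻¹.toReal)) * (b t / a t)) *
      LqNorm q (Ioo 0 t) fun u =>
        ENNReal.ofReal (u ^ (-σ - q⁻¹.toReal) * a u) * Kf N₀ N₁ u f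

/-- The quasi-norm of the limiting interpolation space `Ā^𝓡_{σ,r,b,q,a}`. -/
def normR (N₀ N₁ : E → ℝ≥0∞) (σ : ℝ) (r q : ℝ≥0∞) (b a : ℝ → ℝ) (f : E) : ℝ≥0∞ :=
  LqNorm r (Ioi 0) fun t =>
    ENNReal.ofReal (t ^ (-(r⁻¹.toReal)) * (b t / a t)) *
      LqNorm q (Ioi t) fun u =>
        ENNReal.ofReal (u ^ (-σ - q⁻¹.toReal) * a u) * Kf N₀ N₁ u f

/-- Two (extended-real-valued) quasi-norms define the same space with
equivalent quasi-norms. -/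
def EquivNorms (nX nY : E → ℝ≥0∞) : Prop :=
  ∃ C : ℝ≥0∞, 0 < C ∧ C ≠ ∞ ∧ ∀ f : E, C⁻¹ * nY f ≤ nX f ∧ nX f ≤ C * nY f


/-- discrete `ℓ_q` quasi-norm -/
def sl {ι : Type} (q : ℝ≥0∞) (x : ι → ℝ≥0∞) : ℝ≥0∞ :=
  if q = ∞ then ⨆ i, x i else (∑' i, x i ^ q.toReal) ^ q⁻¹.toReal

lemma toReal_facts {q : ℝ≥0∞} (hq : 0 < q) (h : q ≠ ∞) :
    0 < q.toReal ∧ 0 < q⁻¹.toReal ∧ q.toReal * q⁻¹.toReal = 1 := by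
  have h1 : 0 < q.toReal := ENNReal.toReal_pos hq.ne' h
  have h2 : q⁻¹.toReal = (q.toReal)⁻¹ := ENNReal.toReal_inv q
  refine ⟨h1, ?_, ?_⟩
  · rw [h2]; positivity
  · rw [h2]; exact mul_inv_cancel₀ h1.ne'

lemma sl_mono {ι : Type} (q : ℝ≥0∞) {x y : ι → ℝ≥0∞} (h : ∀ i, x i ≤ y i) : sl q x ≤ sl q y := by
  unfold sl
  split_ifs
  · exact iSup_mono h
  · exact ENNReal.rpow_le_rpow (ENNReal.tsum_le_tsum fun i =>
      ENNReal.rpow_le_rpow (h i) ENNReal.toReal_nonneg) ENNReal.toReal_nonneg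

lemma sl_const_mul {ι : Type} {q : ℝ≥0∞} (hq : 0 < q) (c : ℝ≥0∞) (x : ι → ℝ≥0∞) :
    sl q (fun i => c * x i) = c * sl q x := by
  unfold sl
  split_ifs with h
  · rw [ENNReal.mul_iSup]
  · obtain ⟨h1, h2, h3⟩ := toReal_facts hq h
    simp_rw [ENNReal.mul_rpow_of_nonneg _ _ h1.le]
    rw [ENNReal.tsum_mul_left, ENNReal.mul_rpow_of_nonneg _ _ h2.le, ← ENNReal.rpow_mul, h3,
      ENNReal.rpow_one]

lemma sl_mul_const {ι : Type} {q : ℝ≥0∞} (hq : 0 < q) (c : ℝ≥0∞) (x : ι → ℝ≥0∞) :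
    sl q (fun i => x i * c) = sl q x * c := by
  simp_rw [mul_comm _ c]; exact sl_const_mul hq c x

lemma sl_le_const_mul {ι : Type} {q : ℝ≥0∞} (hq : 0 < q) {c : ℝ≥0∞} {x y : ι → ℝ≥0∞}
    (h : ∀ i, x i ≤ c * y i) : sl q x ≤ c * sl q y := by
  rw [← sl_const_mul hq]; exact sl_mono q h

lemma le_sl {ι : Type} {q : ℝ≥0∞} (hq : 0 < q) (x : ι → ℝ≥0∞) (i : ι) : x i ≤ sl q x := by
  unfold sl
  split_ifs with h
  · exact le_iSup x i
  · obtain ⟨h1, h2, h3⟩ := toReal_facts hq h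
    calc x i = (x i ^ q.toReal) ^ q⁻¹.toReal := by rw [← ENNReal.rpow_mul, h3, ENNReal.rpow_one]
      _ ≤ _ := ENNReal.rpow_le_rpow (ENNReal.le_tsum (f := fun i => x i ^ q.toReal) i) h2.le

lemma add_rpow_le2 (a b : ℝ≥0∞) {p : ℝ} (hp : 0 ≤ p) : (a + b) ^ p ≤ 2 ^ p * (a ^ p + b ^ p) := by
  rcases le_total a b with h | h
  · calc (a + b) ^ p ≤ (2 * b) ^ p := by
          apply ENNReal.rpow_le_rpow _ hp; rw [two_mul]; gcongr
      _ = 2 ^ p * b ^ p := ENNReal.mul_rpow_of_nonneg _ _ hp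
      _ ≤ _ := by gcongr; exact le_add_self
  · calc (a + b) ^ p ≤ (2 * a) ^ p := by
          apply ENNReal.rpow_le_rpow _ hp; rw [two_mul]; gcongr
      _ = 2 ^ p * a ^ p := ENNReal.mul_rpow_of_nonneg _ _ hp
      _ ≤ _ := by gcongr; exact le_self_add

lemma sl_add {q : ℝ≥0∞} (hq : 0 < q) : ∃ C : ℝ≥0∞, C ≠ ∞ ∧ ∀ (ι : Type) (x y : ι → ℝ≥0∞),
    sl q (fun i => x i + y i) ≤ C * (sl q x + sl q y) := by
  by_cases h : q = ∞
  · refine ⟨1, by simp, fun ι x y => ?_⟩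
    simp only [sl, h, if_true, one_mul]
    exact iSup_le fun i => add_le_add (le_iSup x i) (le_iSup y i)
  · obtain ⟨h1, h2, h3⟩ := toReal_facts hq h
    refine ⟨2 * 2 ^ q⁻¹.toReal, by finiteness, fun ι x y => ?_⟩
    simp only [sl, h, if_false]
    calc (∑' i, (x i + y i) ^ q.toReal) ^ q⁻¹.toReal
        ≤ (2 ^ q.toReal * (∑' i, x i ^ q.toReal + ∑' i, y i ^ q.toReal)) ^ q⁻¹.toReal := by
          apply ENNReal.rpow_le_rpow _ h2.le
          rw [← ENNReal.tsum_add, ← ENNReal.tsum_mul_left]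
          exact ENNReal.tsum_le_tsum fun i => add_rpow_le2 _ _ h1.le
      _ = 2 * (∑' i, x i ^ q.toReal + ∑' i, y i ^ q.toReal) ^ q⁻¹.toReal := by
          rw [ENNReal.mul_rpow_of_nonneg _ _ h2.le, ← ENNReal.rpow_mul, h3, ENNReal.rpow_one]
      _ ≤ 2 * (2 ^ q⁻¹.toReal * ((∑' i, x i ^ q.toReal) ^ q⁻¹.toReal
            + (∑' i, y i ^ q.toReal) ^ q⁻¹.toReal)) := by
          gcongr; exact add_rpow_le2 _ _ h2.le
      _ = _ := by rw [mul_assoc]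

lemma sl_geom {q : ℝ≥0∞} (hq : 0 < q) {r : ℝ} (h0 : 0 < r) (h1 : r < 1) :
    sl q (fun j : ℕ => ENNReal.ofReal (r ^ j)) ≠ ∞ := by
  unfold sl
  split_ifs with h
  · apply ne_top_of_le_ne_top ENNReal.one_ne_top
    exact iSup_le fun j => by
      rw [ENNReal.ofReal_le_one]; exact pow_le_one₀ h0.le h1.le
  · obtain ⟨e1, e2, e3⟩ := toReal_facts hq h
    apply ENNReal.rpow_ne_top_of_nonneg e2.le
    have : ∀ j : ℕ, ENNReal.ofReal (r ^ j) ^ q.toReal = (ENNReal.ofReal (r ^ q.toReal)) ^ j := by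
      intro j
      rw [ENNReal.ofReal_rpow_of_nonneg (by positivity) e1.le, ← ENNReal.ofReal_pow (by positivity)]
      congr 1
      rw [← Real.rpow_natCast, ← Real.rpow_natCast, ← Real.rpow_mul h0.le, ← Real.rpow_mul h0.le,
        mul_comm]
    simp_rw [this]
    rw [ENNReal.tsum_geometric]
    apply ENNReal.inv_ne_top.2
    have : ENNReal.ofReal (r ^ q.toReal) < 1 := by
      rw [ENNReal.ofReal_lt_one]; exact Real.rpow_lt_one h0.le h1 e1
    exact (tsub_pos_of_lt this).ne'

lemma sl_hardy {q : ℝ≥0∞} (hq : 0 < q) {r : ℝ} (h0 : 0 < r) (h1 : r < 1) (s : ℤ) :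
    ∃ C : ℝ≥0∞, C ≠ ∞ ∧ ∀ (y : ℤ → ℝ≥0∞),
    sl q (fun k : ℤ => ⨆ j : ℕ, ENNReal.ofReal (r ^ j) * y (k + s * j)) ≤ C * sl q y := by
  refine ⟨sl q (fun j : ℕ => ENNReal.ofReal (r ^ j)), sl_geom hq h0 h1, fun y => ?_⟩
  by_cases h : q = ∞
  · simp only [sl, h, if_true]
    refine iSup_le fun k => iSup_le fun j => ?_
    exact mul_le_mul' (le_iSup (fun j : ℕ => ENNReal.ofReal (r ^ j)) j) (le_iSup y _)
  · obtain ⟨e1, e2, e3⟩ := toReal_facts hq h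
    simp only [sl, h, if_false]
    rw [← ENNReal.mul_rpow_of_nonneg _ _ e2.le]
    apply ENNReal.rpow_le_rpow _ e2.le
    calc ∑' k : ℤ, (⨆ j : ℕ, ENNReal.ofReal (r ^ j) * y (k + s * j)) ^ q.toReal
        ≤ ∑' k : ℤ, ∑' j : ℕ, (ENNReal.ofReal (r ^ j)) ^ q.toReal * y (k + s * j) ^ q.toReal := by
          refine ENNReal.tsum_le_tsum fun k => ?_
          rw [← ENNReal.le_rpow_inv_iff e1]
          refine iSup_le fun j => ?_
          rw [ENNReal.le_rpow_inv_iff e1, ENNReal.mul_rpow_of_nonneg _ _ e1.le]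
          exact ENNReal.le_tsum (f := fun j : ℕ =>
            (ENNReal.ofReal (r ^ j)) ^ q.toReal * y (k + s * j) ^ q.toReal) j
      _ = ∑' j : ℕ, ∑' k : ℤ, (ENNReal.ofReal (r ^ j)) ^ q.toReal * y (k + s * j) ^ q.toReal :=
          ENNReal.tsum_comm
      _ = _ := by
          rw [← ENNReal.tsum_mul_right]
          congr 1; ext j
          rw [ENNReal.tsum_mul_left]
          congr 1
          exact (Equiv.addRight (s * (j : ℤ))).tsum_eq (fun k => y k ^ q.toReal)

lemma sl_reindex {q : ℝ≥0∞} (hq : 0 < q) (N : ℕ) :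
    ∃ C : ℝ≥0∞, C ≠ ∞ ∧ ∀ (y : ℤ → ℝ≥0∞) (e : ℤ → ℤ), (∀ i j, e i = e j → |i - j| ≤ N) →
    sl q (fun k : ℤ => y (e k)) ≤ C * sl q y := by
  by_cases h : q = ∞
  · refine ⟨1, by simp, fun y e _ => ?_⟩
    simp only [sl, h, if_true, one_mul]
    exact iSup_le fun k => le_iSup y (e k)
  · obtain ⟨e1, e2, e3⟩ := toReal_facts hq h
    refine ⟨((2 * N + 1 : ℕ) : ℝ≥0∞) ^ q⁻¹.toReal, by finiteness, fun y e he => ?_⟩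
    simp only [sl, h, if_false]
    rw [← ENNReal.mul_rpow_of_nonneg _ _ e2.le]
    apply ENNReal.rpow_le_rpow _ e2.le
    calc ∑' k, y (e k) ^ q.toReal
        = ∑' i, ∑' k, (if e i = k then 1 else 0) * y k ^ q.toReal := by
          congr 1; ext i
          rw [tsum_eq_single (e i)]
          · simp
          · intro k hk; simp [hk.symm]
      _ = ∑' k, ∑' i, (if e i = k then 1 else 0) * y k ^ q.toReal := ENNReal.tsum_comm
      _ ≤ ∑' k, ((2 * N + 1 : ℕ) : ℝ≥0∞) * y k ^ q.toReal := by
          refine ENNReal.tsum_le_tsum fun k => ?_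
          rw [ENNReal.tsum_mul_right]
          gcongr
          by_cases hk : ∃ i, e i = k
          · obtain ⟨i₀, hi₀⟩ := hk
            rw [tsum_eq_sum (s := Finset.Icc (i₀ - N) (i₀ + N))]
            · calc _ ≤ ∑ b ∈ Finset.Icc (i₀ - N : ℤ) (i₀ + N), (1 : ℝ≥0∞) := by
                    refine Finset.sum_le_sum fun i _ => ?_
                    split_ifs <;> simp
                _ ≤ _ := by
                    rw [Finset.sum_const, Int.card_Icc, nsmul_eq_mul, mul_one]
                    norm_cast
                    omega
            · intro i hi
              rw [if_neg]
              intro h'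
              have := he i i₀ (h'.trans hi₀.symm)
              rw [abs_le] at this
              simp only [Finset.mem_Icc] at hi
              omega
          · push Not at hk
            simp [hk]
      _ = _ := by rw [ENNReal.tsum_mul_left]

/-- doubling functions -/
def Dbl (D : ℝ≥0∞) (φ : ℝ → ℝ≥0∞) : Prop :=
  ∀ x y : ℝ, 0 < x → 0 < y → x ≤ 2 * y → y ≤ 2 * x → φ x ≤ D * φ y

lemma disc {q : ℝ≥0∞} (hq : 0 < q) {D : ℝ≥0∞} (hD : D ≠ ∞) :
    ∃ C : ℝ≥0∞, C ≠ ∞ ∧ ∀ (ι : Type) [Countable ι] (p : ι → ℝ) (s : Set ℝ) (φ : ℝ → ℝ≥0∞),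
      (∀ i, 0 < p i) → Pairwise (Function.onFun Disjoint fun i => Ico (p i) (2 * p i)) →
      s =ᵐ[volume] ⋃ i, Ico (p i) (2 * p i) → Dbl D φ →
      LqNorm q s (fun u => ENNReal.ofReal (u ^ (-(q⁻¹.toReal))) * φ u) ≤ C * sl q (fun i => φ (p i)) ∧
      sl q (fun i => φ (p i)) ≤ C * LqNorm q s (fun u => ENNReal.ofReal (u ^ (-(q⁻¹.toReal))) * φ u) := by
  by_cases h : q = ∞
  · refine ⟨D, hD, fun ι _ p s φ hp hdis hs hφ => ?_⟩
    simp only [LqNorm, sl, h, if_true, inv_top, toReal_zero, neg_zero, Real.rpow_zero,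
      ENNReal.ofReal_one, one_mul]
    rw [Measure.restrict_congr_set hs]
    have hm : MeasurableSet (⋃ i, Ico (p i) (2 * p i)) := MeasurableSet.iUnion fun i => measurableSet_Ico
    constructor
    · refine essSup_le_of_ae_le _ ?_
      filter_upwards [ae_restrict_mem hm] with u hu
      obtain ⟨i, hi1, hi2⟩ := mem_iUnion.1 hu
      have := hp i
      calc φ u ≤ D * φ (p i) := hφ u (p i) (by linarith) this hi2.le (by linarith)
        _ ≤ _ := by gcongr; exact le_iSup (fun i => φ (p i)) i
    · refine iSup_le fun i => ?_
      have h1 : ∀ᵐ u ∂(volume.restrict (Ico (p i) (2 * p i))),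
          φ u ≤ essSup φ (volume.restrict (⋃ i, Ico (p i) (2 * p i))) :=
        ae_restrict_of_ae_restrict_of_subset (subset_iUnion (fun i => Ico (p i) (2 * p i)) i)
          (ENNReal.ae_le_essSup φ)
      have h2 := h1.and (ae_restrict_mem (μ := volume) (measurableSet_Ico (a := p i) (b := 2 * p i)))
      have : NeBot (ae (volume.restrict (Ico (p i) (2 * p i)))) := by
        rw [ae_neBot]
        intro h0
        rw [Measure.restrict_eq_zero, Real.volume_Ico] at h0
        have := hp i
        simp at h0; linarith
      obtain ⟨u, hu1, hu2, hu3⟩ := h2.exists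
      have := hp i
      calc φ (p i) ≤ D * φ u := hφ (p i) u this (by linarith) (by linarith) hu3.le
        _ ≤ _ := by gcongr
  · obtain ⟨e1, e2, e3⟩ := toReal_facts hq h
    refine ⟨2 ^ q⁻¹.toReal * D, by finiteness, fun ι _ p s φ hp hdis hs hφ => ?_⟩
    simp only [LqNorm, sl, h, if_false]
    rw [Measure.restrict_congr_set hs, lintegral_iUnion (fun i => measurableSet_Ico) hdis]
    have key : ∀ u : ℝ, 0 < u → (ENNReal.ofReal (u ^ (-(q⁻¹.toReal))) * φ u) ^ q.toReal
        = ENNReal.ofReal (u⁻¹) * φ u ^ q.toReal := by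
      intro u hu
      rw [ENNReal.mul_rpow_of_nonneg _ _ e1.le, ENNReal.ofReal_rpow_of_nonneg (by positivity) e1.le,
        ← Real.rpow_mul hu.le, neg_mul, mul_comm (q⁻¹.toReal), e3, Real.rpow_neg_one]
    have up : ∀ i, ∫⁻ u in Ico (p i) (2 * p i), (ENNReal.ofReal (u ^ (-(q⁻¹.toReal))) * φ u) ^ q.toReal
        ≤ D ^ q.toReal * φ (p i) ^ q.toReal := by
      intro i
      have hi := hp i
      calc _ ≤ ∫⁻ u in Ico (p i) (2 * p i), ENNReal.ofReal ((p i)⁻¹) * (D ^ q.toReal * φ (p i) ^ q.toReal) := by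
            refine setLIntegral_mono' measurableSet_Ico fun u hu => ?_
            have hu0 : 0 < u := lt_of_lt_of_le hi hu.1
            rw [key u hu0, ← ENNReal.mul_rpow_of_nonneg _ _ e1.le]
            gcongr
            · exact hu.1
            · exact hφ u (p i) hu0 hi hu.2.le (by linarith [hu.1])
        _ = _ := by
            rw [setLIntegral_const, Real.volume_Ico, mul_comm, ← mul_assoc,
              ← ENNReal.ofReal_mul (by linarith)]
            rw [show (2 * p i - p i) * (p i)⁻¹ = 1 by field_simp; ring]; simp
    have lo : ∀ i, φ (p i) ^ q.toReal ≤ 2 * D ^ q.toReal *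
        ∫⁻ u in Ico (p i) (2 * p i), (ENNReal.ofReal (u ^ (-(q⁻¹.toReal))) * φ u) ^ q.toReal := by
      intro i
      have hi := hp i
      rw [← lintegral_const_mul' _ _ (by finiteness)]
      calc φ (p i) ^ q.toReal = ∫⁻ u in Ico (p i) (2 * p i),
              2 * (ENNReal.ofReal ((2 * p i)⁻¹) * φ (p i) ^ q.toReal) := by
            rw [setLIntegral_const, Real.volume_Ico, mul_comm, ← mul_assoc, ← mul_assoc,
              show (2 : ℝ≥0∞) = ENNReal.ofReal 2 by simp, ← ENNReal.ofReal_mul (by linarith),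
              ← ENNReal.ofReal_mul (by linarith)]
            rw [show (2 * p i - p i) * 2 * (2 * p i)⁻¹ = 1 by field_simp; ring]; simp
        _ ≤ _ := by
            refine setLIntegral_mono' measurableSet_Ico fun u hu => ?_
            have hu0 : 0 < u := lt_of_lt_of_le hi hu.1
            rw [key u hu0, mul_assoc]
            gcongr 2 * ?_
            rw [mul_left_comm, ← ENNReal.mul_rpow_of_nonneg _ _ e1.le]
            gcongr
            · exact hu.2.le
            · exact hφ (p i) u hi hu0 (by linarith [hu.1]) hu.2.le
    constructor
    · calc _ ≤ (∑' i, D ^ q.toReal * φ (p i) ^ q.toReal) ^ q⁻¹.toReal :=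
            ENNReal.rpow_le_rpow (ENNReal.tsum_le_tsum up) e2.le
        _ = D * (∑' i, φ (p i) ^ q.toReal) ^ q⁻¹.toReal := by
            rw [ENNReal.tsum_mul_left, ENNReal.mul_rpow_of_nonneg _ _ e2.le, ← ENNReal.rpow_mul, e3,
              ENNReal.rpow_one]
        _ ≤ _ := by
            gcongr
            apply le_mul_of_one_le_left (zero_le)
            exact ENNReal.one_le_rpow (by norm_num) e2
    · calc _ ≤ (∑' i, 2 * D ^ q.toReal * ∫⁻ u in Ico (p i) (2 * p i),
              (ENNReal.ofReal (u ^ (-(q⁻¹.toReal))) * φ u) ^ q.toReal) ^ q⁻¹.toReal :=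
            ENNReal.rpow_le_rpow (ENNReal.tsum_le_tsum lo) e2.le
        _ = _ := by
            rw [ENNReal.tsum_mul_left, ENNReal.mul_rpow_of_nonneg _ _ e2.le,
              ENNReal.mul_rpow_of_nonneg _ _ e2.le, ← ENNReal.rpow_mul, e3,
              ENNReal.rpow_one]


lemma disj_of_lt {ι : Type} [LinearOrder ι] (p : ι → ℝ) (h : ∀ i j, i < j → 2 * p i ≤ p j) :
    Pairwise (Function.onFun Disjoint fun i => Ico (p i) (2 * p i)) := by
  intro i j hij
  rw [Function.onFun, Set.disjoint_left]
  rintro u ⟨h1, h2⟩ ⟨h3, h4⟩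
  rcases lt_or_gt_of_ne hij with hlt | hlt
  · linarith [h i j hlt]
  · linarith [h j i hlt]

lemma disj_of_gt {ι : Type} [LinearOrder ι] (p : ι → ℝ) (h : ∀ i j, i < j → 2 * p j ≤ p i) :
    Pairwise (Function.onFun Disjoint fun i => Ico (p i) (2 * p i)) := by
  intro i j hij
  rw [Function.onFun, Set.disjoint_left]
  rintro u ⟨h1, h2⟩ ⟨h3, h4⟩
  rcases lt_or_gt_of_ne hij with hlt | hlt
  · linarith [h i j hlt]
  · linarith [h j i hlt]

/-- the integrand `u^{-1/q} φ(u)` -/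
def itg (q : ℝ≥0∞) (φ : ℝ → ℝ≥0∞) : ℝ → ℝ≥0∞ :=
  fun u => ENNReal.ofReal (u ^ (-(q⁻¹.toReal))) * φ u

lemma discZ {q : ℝ≥0∞} (hq : 0 < q) {D : ℝ≥0∞} (hD : D ≠ ∞) :
    ∃ C : ℝ≥0∞, C ≠ ∞ ∧ ∀ (φ : ℝ → ℝ≥0∞), Dbl D φ →
      LqNorm q (Ioi 0) (itg q φ) ≤ C * sl q (fun k : ℤ => φ ((2 : ℝ) ^ k)) ∧
      sl q (fun k : ℤ => φ ((2 : ℝ) ^ k)) ≤ C * LqNorm q (Ioi 0) (itg q φ) := by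
  obtain ⟨C, hC, h⟩ := disc hq hD
  refine ⟨C, hC, fun φ hφ => h ℤ (fun k : ℤ => (2 : ℝ) ^ k) (Ioi 0) φ
    (fun i => by positivity) ?_ ?_ hφ⟩
  · apply disj_of_lt
    intro i j hij
    calc 2 * (2 : ℝ) ^ i = (2 : ℝ) ^ (i + 1) := by rw [zpow_add_one₀ (by norm_num)]; ring
      _ ≤ _ := zpow_le_zpow_right₀ (by norm_num) (by omega)
  · refine Filter.EventuallyEq.of_eq (Set.ext fun u => ?_)
    simp only [mem_Ioi, mem_iUnion, mem_Ico]
    constructor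
    · intro hu
      obtain ⟨n, h1, h2⟩ := exists_mem_Ico_zpow hu (one_lt_two (α := ℝ))
      refine ⟨n, h1, ?_⟩
      rw [zpow_add_one₀ (by norm_num)] at h2; linarith
    · rintro ⟨n, h1, h2⟩
      exact lt_of_lt_of_le (by positivity) h1

lemma discP {q : ℝ≥0∞} (hq : 0 < q) {D : ℝ≥0∞} (hD : D ≠ ∞) :
    ∃ C : ℝ≥0∞, C ≠ ∞ ∧ ∀ (φ : ℝ → ℝ≥0∞), Dbl D φ → ∀ t : ℝ, 0 < t → 
      LqNorm q (Ioi t) (itg q φ) ≤ C * sl q (fun k : ℕ => φ ((2 : ℝ) ^ k * t)) ∧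
      sl q (fun k : ℕ => φ ((2 : ℝ) ^ k * t)) ≤ C * LqNorm q (Ioi t) (itg q φ) := by
  obtain ⟨C, hC, h⟩ := disc hq hD
  refine ⟨C, hC, fun φ hφ t ht => h ℕ (fun k : ℕ => (2 : ℝ) ^ k * t) (Ioi t) φ
    (fun i => by positivity) ?_ ?_ hφ⟩
  · apply disj_of_lt
    intro i j hij
    calc 2 * ((2 : ℝ) ^ i * t) = (2 : ℝ) ^ (i + 1) * t := by ring
      _ ≤ _ := by gcongr; norm_num; omega
  · apply Ioi_ae_eq_Ici.trans
    refine Filter.EventuallyEq.of_eq (Set.ext fun u => ?_)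
    simp only [mem_Ici, mem_iUnion, mem_Ico]
    constructor
    · intro hu
      obtain ⟨n, h1, h2⟩ := exists_nat_pow_near (x := u / t) (by rwa [le_div_iff₀ ht, one_mul])
        (one_lt_two (α := ℝ))
      rw [le_div_iff₀ ht] at h1
      rw [div_lt_iff₀ ht] at h2
      refine ⟨n, h1, ?_⟩
      calc u < _ := h2
        _ = _ := by ring
    · rintro ⟨n, h1, h2⟩
      refine le_trans ?_ h1
      exact le_mul_of_one_le_left ht.le (one_le_pow₀ (by norm_num))

lemma discN {q : ℝ≥0∞} (hq : 0 < q) {D : ℝ≥0∞} (hD : D ≠ ∞) :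
    ∃ C : ℝ≥0∞, C ≠ ∞ ∧ ∀ (φ : ℝ → ℝ≥0∞), Dbl D φ → ∀ t : ℝ, 0 < t → 
      LqNorm q (Ioo 0 t) (itg q φ) ≤ C * sl q (fun k : ℕ => φ (t / (2 : ℝ) ^ k)) ∧
      sl q (fun k : ℕ => φ (t / (2 : ℝ) ^ k)) ≤ C * LqNorm q (Ioo 0 t) (itg q φ) := by
  obtain ⟨C, hC, h⟩ := disc hq hD
  refine ⟨C * D, by finiteness, fun φ hφ t ht => ?_⟩
  have key := h ℕ (fun k : ℕ => t / (2 : ℝ) ^ (k + 1)) (Ioo 0 t) φ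
    (fun i => by positivity) ?_ ?_ hφ
  · have e1 : sl q (fun k : ℕ => φ (t / (2 : ℝ) ^ (k + 1))) ≤ D * sl q (fun k : ℕ => φ (t / (2 : ℝ) ^ k)) := by
      apply sl_le_const_mul hq
      intro i
      have : t / 2 ^ i = 2 * (t / (2 : ℝ) ^ (i + 1)) := by rw [pow_succ]; field_simp
      have h3 : 0 < t / (2 : ℝ) ^ (i + 1) := by positivity
      apply hφ _ _ (by positivity) (by positivity) <;> rw [this] <;> linarith
    have e2 : sl q (fun k : ℕ => φ (t / (2 : ℝ) ^ k)) ≤ D * sl q (fun k : ℕ => φ (t / (2 : ℝ) ^ (k + 1))) := by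
      apply sl_le_const_mul hq
      intro i
      have : t / 2 ^ i = 2 * (t / (2 : ℝ) ^ (i + 1)) := by rw [pow_succ]; field_simp
      have h3 : 0 < t / (2 : ℝ) ^ (i + 1) := by positivity
      apply hφ _ _ (by positivity) (by positivity) <;> rw [this] <;> linarith
    constructor
    · calc _ ≤ _ := key.1
        _ ≤ C * (D * sl q (fun k : ℕ => φ (t / (2 : ℝ) ^ k))) := by gcongr
        _ = _ := by ring
    · calc _ ≤ _ := e2
        _ ≤ D * (C * LqNorm q (Ioo 0 t) (itg q φ)) := by gcongr; exact key.2
        _ = _ := by ring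
  · apply disj_of_gt
    intro i j hij
    have : (2 : ℝ) ^ (i + 1) * 2 ≤ 2 ^ (j + 1) := by
      rw [← pow_succ]; gcongr; norm_num; omega
    rw [mul_div_assoc', div_le_div_iff₀ (by positivity) (by positivity)]
    nlinarith
  · refine Filter.EventuallyEq.of_eq (Set.ext fun u => ?_)
    simp only [mem_Ioo, mem_iUnion, mem_Ico]
    constructor
    · rintro ⟨hu, hut⟩
      obtain ⟨n, h1, h2⟩ := exists_mem_Ico_zpow (div_pos hu ht) (one_lt_two (α := ℝ))
      have hn : n < 0 := by
        by_contra hn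
        push Not at hn
        have : (1 : ℝ) ≤ 2 ^ n := one_le_zpow₀ (by norm_num) hn
        have h3 : u / t < 1 := by rwa [div_lt_one ht]
        linarith
      obtain ⟨j, hj⟩ := Int.eq_ofNat_of_zero_le (show 0 ≤ - n - 1 by omega)
      have hn' : n = -((j + 1 : ℕ) : ℤ) := by push_cast; omega
      rw [zpow_add_one₀ (by norm_num)] at h2
      rw [hn', zpow_neg, zpow_natCast] at h1 h2
      rw [le_div_iff₀ ht] at h1
      rw [div_lt_iff₀ ht] at h2
      refine ⟨j, ?_, ?_⟩
      · rw [div_eq_inv_mul]; exact h1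
      · rw [div_eq_inv_mul]; linarith
    · rintro ⟨n, h1, h2⟩
      have : t / (2 : ℝ) ^ (n + 1) > 0 := by positivity
      refine ⟨by linarith, lt_of_lt_of_le h2 ?_⟩
      have : (1 : ℝ) ≤ 2 ^ n := one_le_pow₀ (by norm_num)
      rw [mul_div_assoc', div_le_iff₀ (by positivity), pow_succ]
      nlinarith

lemma LqNorm_mono_set (q : ℝ≥0∞) {s s' : Set ℝ} (h : s ⊆ s') (g : ℝ → ℝ≥0∞) :
    LqNorm q s g ≤ LqNorm q s' g := by
  unfold LqNorm
  split_ifs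
  · exact essSup_mono_measure (Measure.absolutelyContinuous_of_le (Measure.restrict_mono h le_rfl))
  · exact ENNReal.rpow_le_rpow (lintegral_mono_set h) ENNReal.toReal_nonneg

lemma LqNorm_split {q : ℝ≥0∞} (hq : 0 < q) : ∃ C : ℝ≥0∞, C ≠ ∞ ∧ ∀ (s : Set ℝ) (t : ℝ) (g : ℝ → ℝ≥0∞),
    0 < t → s ⊆ Ioi 0 → LqNorm q s g ≤ C * (LqNorm q (Ioo 0 t) g + LqNorm q (Ioi t) g) := by
  have hset : ∀ (s : Set ℝ) (t : ℝ), 0 < t → s ⊆ Ioi 0 → s ≤ᵐ[volume] (Ioo 0 t ∪ Ioi t : Set ℝ) := by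
    intro s t ht hs
    have : ∀ᵐ u : ℝ ∂volume, u ≠ t := by
      simp [ae_iff]
    filter_upwards [this] with u hu hus
    rcases lt_or_gt_of_ne hu with h | h
    · exact Or.inl ⟨hs hus, h⟩
    · exact Or.inr h
  by_cases h : q = ∞
  · refine ⟨1, by simp, fun s t g ht hs => ?_⟩
    simp only [LqNorm, h, if_true, one_mul]
    refine essSup_le_of_ae_le _ ?_
    have h1 := ENNReal.ae_le_essSup (μ := volume.restrict (Ioo 0 t)) g
    have h2 := ENNReal.ae_le_essSup (μ := volume.restrict (Ioi t)) g
    rw [ae_restrict_iff' measurableSet_Ioo] at h1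
    rw [ae_restrict_iff' measurableSet_Ioi] at h2
    have : ∀ᵐ u ∂(volume.restrict (Ioo 0 t ∪ Ioi t)), g u ≤ essSup g (volume.restrict (Ioo 0 t)) + essSup g (volume.restrict (Ioi t)) := by
      rw [ae_restrict_iff' (measurableSet_Ioo.union measurableSet_Ioi)]
      filter_upwards [h1, h2] with u h1 h2 hu
      rcases hu with hu | hu
      · exact (h1 hu).trans le_self_add
      · exact (h2 hu).trans le_add_self
    exact ae_mono (Measure.restrict_mono_ae (hset s t ht hs)) this
  · obtain ⟨e1, e2, e3⟩ := toReal_facts hq h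
    refine ⟨2 ^ q⁻¹.toReal, by finiteness, fun s t g ht hs => ?_⟩
    simp only [LqNorm, h, if_false]
    refine le_trans ?_ (add_rpow_le2 _ _ e2.le)
    apply ENNReal.rpow_le_rpow _ e2.le
    calc _ ≤ ∫⁻ u in (Ioo 0 t ∪ Ioi t), g u ^ q.toReal :=
          lintegral_mono_set' (hset s t ht hs)
      _ ≤ _ := lintegral_union_le _ _ _

/-- `w` behaves like `t^α` times a slowly varying function. -/
def PW (α : ℝ) (w : ℝ → ℝ) : Prop :=
  (∀ t, 0 < t → 0 < w t) ∧ ∀ ε : ℝ, 0 < ε → ∃ c : ℝ, ∀ x y : ℝ, 0 < x → 0 < y →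
    |Real.log (w y) - Real.log (w x) - α * (Real.log y - Real.log x)|
      ≤ c + ε * |Real.log y - Real.log x|

lemma PW.mul {α β : ℝ} {w v : ℝ → ℝ} (hw : PW α w) (hv : PW β v) :
    PW (α + β) (fun t => w t * v t) := by
  refine ⟨fun t ht => mul_pos (hw.1 t ht) (hv.1 t ht), fun ε hε => ?_⟩
  obtain ⟨c, hc⟩ := hw.2 (ε / 2) (by positivity)
  obtain ⟨d, hd⟩ := hv.2 (ε / 2) (by positivity)
  refine ⟨c + d, fun x y hx hy => ?_⟩
  rw [Real.log_mul (hw.1 y hy).ne' (hv.1 y hy).ne', Real.log_mul (hw.1 x hx).ne' (hv.1 x hx).ne']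
  have h1 := hc x y hx hy
  have h2 := hd x y hx hy
  rw [abs_le] at *
  constructor <;> linarith

lemma PW.inv {α : ℝ} {w : ℝ → ℝ} (hw : PW α w) : PW (-α) (fun t => (w t)⁻¹) := by
  refine ⟨fun t ht => inv_pos.2 (hw.1 t ht), fun ε hε => ?_⟩
  obtain ⟨c, hc⟩ := hw.2 ε hε
  refine ⟨c, fun x y hx hy => ?_⟩
  rw [Real.log_inv, Real.log_inv]
  have h1 := hc x y hx hy
  rw [abs_le] at *
  constructor <;> linarith

lemma PW.rpow {α : ℝ} {w : ℝ → ℝ} (hw : PW α w) (γ : ℝ) : PW (γ * α) (fun t => w t ^ γ) := by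
  refine ⟨fun t ht => Real.rpow_pos_of_pos (hw.1 t ht) _, fun ε hε => ?_⟩
  obtain ⟨c, hc⟩ := hw.2 (ε / (|γ| + 1)) (by positivity)
  refine ⟨|γ| * c, fun x y hx hy => ?_⟩
  rw [Real.log_rpow (hw.1 y hy), Real.log_rpow (hw.1 x hx)]
  have h1 := hc x y hx hy
  calc _ = |γ| * |Real.log (w y) - Real.log (w x) - α * (Real.log y - Real.log x)| := by
        rw [← abs_mul]; ring_nf
    _ ≤ |γ| * (c + ε / (|γ| + 1) * |Real.log y - Real.log x|) := by gcongr
    _ = |γ| * c + (|γ| / (|γ| + 1)) * (ε * |Real.log y - Real.log x|) := by ring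
    _ ≤ |γ| * c + 1 * (ε * |Real.log y - Real.log x|) := by
        gcongr
        rw [div_le_one (by positivity)]; linarith
    _ = _ := by ring

lemma PW.id : PW 1 (fun t => t) := by
  refine ⟨fun t ht => ht, fun ε hε => ⟨0, fun x y hx hy => ?_⟩⟩
  rw [one_mul, sub_self, abs_zero]; positivity

lemma PW.pow (α : ℝ) : PW α (fun t => t ^ α) := by
  simpa using PW.id.rpow α

lemma PW.comp {α : ℝ} {a ρ : ℝ → ℝ} (ha : PW 0 a) (hρ : PW α ρ) : PW 0 (fun t => a (ρ t)) := by
  refine ⟨fun t ht => ha.1 _ (hρ.1 t ht), fun ε hε => ?_⟩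
  obtain ⟨d, hd⟩ := hρ.2 1 one_pos
  obtain ⟨c, hc⟩ := ha.2 (ε / (|α| + 1)) (by positivity)
  refine ⟨c + ε / (|α| + 1) * d, fun x y hx hy => ?_⟩
  have h1 := hc (ρ x) (ρ y) (hρ.1 x hx) (hρ.1 y hy)
  have h2 := hd x y hx hy
  have h3 : |Real.log (ρ y) - Real.log (ρ x)| ≤ d + (|α| + 1) * |Real.log y - Real.log x| := by
    have h4 : |α * (Real.log y - Real.log x)| = |α| * |Real.log y - Real.log x| := abs_mul _ _
    have h5 := abs_sub_abs_le_abs_sub (Real.log (ρ y) - Real.log (ρ x)) (α * (Real.log y - Real.log x))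
    linarith
  simp only [zero_mul, sub_zero] at h1 ⊢
  calc _ ≤ _ := h1
    _ ≤ c + ε / (|α| + 1) * (d + (|α| + 1) * |Real.log y - Real.log x|) := by gcongr
    _ = _ := by field_simp; ring

lemma PW.of_sv {b : ℝ → ℝ} (hb : SlowlyVarying b) : PW 0 b := by
  obtain ⟨_, hpos, h⟩ := hb
  refine ⟨fun t ht => hpos t ht, fun ε hε => ?_⟩
  obtain ⟨⟨g, hg, C, hC, hCg⟩, ⟨g', hg', C', hC', hCg'⟩⟩ := h ε hε
  have key1 : ∀ x y : ℝ, 0 < x → x ≤ y → Real.log (b x) ≤ 2 * Real.log C + ε * (Real.log y - Real.log x) + Real.log (b y) := by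
    intro x y hx hxy
    have hy := lt_of_lt_of_le hx hxy
    have h1 : x ^ ε * b x ≤ C * C * (y ^ ε * b y) := by
      have e1 := (hCg x hx).2
      have e2 := (hCg y hy).1
      have e3 := hg hx hy hxy
      rw [inv_mul_le_iff₀ hC] at e2
      calc _ ≤ _ := e1
        _ ≤ C * (C * (y ^ ε * b y)) := by gcongr; linarith
        _ = _ := by ring
    have hbx := hpos x hx
    have hby := hpos y hy
    have hx' := Real.rpow_pos_of_pos hx ε
    have hy' := Real.rpow_pos_of_pos hy ε
    have h2 := Real.log_le_log (mul_pos hx' hbx) h1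
    rw [Real.log_mul hx'.ne' hbx.ne', Real.log_mul (by positivity) (by positivity),
      Real.log_mul hC.ne' hC.ne', Real.log_mul hy'.ne' hby.ne', Real.log_rpow hx, Real.log_rpow hy] at h2
    linarith
  have key2 : ∀ x y : ℝ, 0 < x → x ≤ y → Real.log (b y) ≤ 2 * Real.log C' + ε * (Real.log y - Real.log x) + Real.log (b x) := by
    intro x y hx hxy
    have hy := lt_of_lt_of_le hx hxy
    have h1 : y ^ (-ε) * b y ≤ C' * C' * (x ^ (-ε) * b x) := by
      have e1 := (hCg' y hy).2
      have e2 := (hCg' x hx).1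
      have e3 := hg' hx hy hxy
      rw [inv_mul_le_iff₀ hC'] at e2
      calc _ ≤ _ := e1
        _ ≤ C' * (C' * (x ^ (-ε) * b x)) := by gcongr; linarith
        _ = _ := by ring
    have hbx := hpos x hx
    have hby := hpos y hy
    have hx' := Real.rpow_pos_of_pos hx (-ε)
    have hy' := Real.rpow_pos_of_pos hy (-ε)
    have h2 := Real.log_le_log (mul_pos hy' hby) h1
    rw [Real.log_mul hy'.ne' hby.ne', Real.log_mul (by positivity) (by positivity),
      Real.log_mul hC'.ne' hC'.ne', Real.log_mul hx'.ne' hbx.ne', Real.log_rpow hx, Real.log_rpow hy] at h2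
    linarith
  refine ⟨|2 * Real.log C| + |2 * Real.log C'|, fun x y hx hy => ?_⟩
  rw [zero_mul, sub_zero]
  have a1 := le_abs_self (2 * Real.log C)
  have a2 := le_abs_self (2 * Real.log C')
  have a3 := abs_nonneg (2 * Real.log C)
  have a4 := abs_nonneg (2 * Real.log C')
  rcases le_total x y with hxy | hxy
  · have k1 := key1 x y hx hxy
    have k2 := key2 x y hx hxy
    rw [abs_of_nonneg (a := Real.log y - Real.log x) (by linarith [Real.log_le_log hx hxy]), abs_le]
    constructor <;> linarith
  · have k1 := key1 y x hy hxy
    have k2 := key2 y x hy hxy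
    rw [abs_of_nonpos (a := Real.log y - Real.log x) (by linarith [Real.log_le_log hy hxy]), abs_le]
    constructor <;> linarith

/-- pass from a logarithmic bound to an `ℝ≥0∞` bound -/
lemma ofReal_le_of_log {c L u v : ℝ} (hu : 0 < u) (hv : 0 < v)
    (h : Real.log u ≤ c + L + Real.log v) :
    ENNReal.ofReal u ≤ ENNReal.ofReal (Real.exp c) * ENNReal.ofReal (Real.exp L) * ENNReal.ofReal v := by
  rw [← ENNReal.ofReal_mul (by positivity), ← ENNReal.ofReal_mul (by positivity)]
  apply ENNReal.ofReal_le_ofReal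
  rw [← Real.log_le_log_iff hu (by positivity), Real.log_mul (by positivity) hv.ne',
    Real.log_mul (by positivity) (by positivity), Real.log_exp, Real.log_exp]
  exact h

lemma PW.dbl {α : ℝ} {w : ℝ → ℝ} (hw : PW α w) :
    ∃ D : ℝ≥0∞, D ≠ ∞ ∧ Dbl D (fun t => ENNReal.ofReal (w t)) := by
  obtain ⟨c, hc⟩ := hw.2 1 one_pos
  refine ⟨ENNReal.ofReal (Real.exp c) * ENNReal.ofReal (Real.exp ((|α| + 1) * Real.log 2)), by finiteness,
    fun x y hx hy h1 h2 => ?_⟩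
  apply ofReal_le_of_log (hw.1 x hx) (hw.1 y hy)
  have h3 := hc y x hy hx
  have h4 : |Real.log x - Real.log y| ≤ Real.log 2 := by
    have e1 := Real.log_le_log hx h1
    have e2 := Real.log_le_log hy h2
    rw [Real.log_mul (by norm_num) (by positivity)] at e1 e2
    rw [abs_le]; constructor <;> linarith
  have h5 : |α * (Real.log x - Real.log y)| ≤ |α| * Real.log 2 := by
    rw [abs_mul]; gcongr
  rw [abs_le] at h3 h5
  linarith [h3.1, h3.2, h5.1, h5.2]

lemma exp_pow_eq (δ : ℝ) (j : ℕ) : Real.exp (δ * (j * Real.log 2)) = ((2 : ℝ) ^ δ) ^ j := by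
  rw [Real.rpow_def_of_pos (by norm_num), ← Real.exp_nat_mul]; ring_nf

lemma PW.decay {α : ℝ} {w : ℝ → ℝ} (hw : PW α w) {δ : ℝ} (hδ : δ < α) :
    ∃ C : ℝ≥0∞, C ≠ ∞ ∧ ∀ (t : ℝ) (j : ℕ), 0 < t →
      ENNReal.ofReal (w t) ≤ C * ENNReal.ofReal (((2 : ℝ) ^ (-δ)) ^ j) * ENNReal.ofReal (w (2 ^ j * t)) := by
  obtain ⟨c, hc⟩ := hw.2 (α - δ) (by linarith)
  refine ⟨ENNReal.ofReal (Real.exp c), by finiteness, fun t j ht => ?_⟩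
  have ht' : 0 < 2 ^ j * t := by positivity
  rw [← exp_pow_eq]
  apply ofReal_le_of_log (hw.1 t ht) (hw.1 _ ht')
  have h := hc t (2 ^ j * t) ht ht'
  have e : Real.log (2 ^ j * t) - Real.log t = j * Real.log 2 := by
    rw [Real.log_mul (by positivity) (by positivity), Real.log_pow]; ring
  have h2 := Real.log_pos (show (1 : ℝ) < 2 by norm_num)
  rw [e, abs_of_nonneg (a := (j : ℝ) * Real.log 2) (by positivity), abs_le] at h
  linarith [h.1]

lemma PW.growth {α : ℝ} {w : ℝ → ℝ} (hw : PW α w) {δ : ℝ} (hδ : α < δ) :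
    ∃ C : ℝ≥0∞, C ≠ ∞ ∧ ∀ (t : ℝ) (j : ℕ), 0 < t →
      ENNReal.ofReal (w (2 ^ j * t)) ≤ C * ENNReal.ofReal (((2 : ℝ) ^ δ) ^ j) * ENNReal.ofReal (w t) := by
  obtain ⟨c, hc⟩ := hw.2 (δ - α) (by linarith)
  refine ⟨ENNReal.ofReal (Real.exp c), by finiteness, fun t j ht => ?_⟩
  have ht' : 0 < 2 ^ j * t := by positivity
  rw [← exp_pow_eq]
  apply ofReal_le_of_log (hw.1 _ ht') (hw.1 _ ht)
  have h := hc t (2 ^ j * t) ht ht'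
  have e : Real.log (2 ^ j * t) - Real.log t = j * Real.log 2 := by
    rw [Real.log_mul (by positivity) (by positivity), Real.log_pow]; ring
  have h2 := Real.log_pos (show (1 : ℝ) < 2 by norm_num)
  rw [e, abs_of_nonneg (a := (j : ℝ) * Real.log 2) (by positivity), abs_le] at h
  linarith [h.2]


lemma Dbl.mul {D D' : ℝ≥0∞} {φ ψ : ℝ → ℝ≥0∞} (h : Dbl D φ) (h' : Dbl D' ψ) :
    Dbl (D * D') (fun t => φ t * ψ t) := by
  intro x y hx hy h1 h2
  calc φ x * ψ x ≤ (D * φ y) * (D' * ψ y) := mul_le_mul' (h x y hx hy h1 h2) (h' x y hx hy h1 h2)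
    _ = _ := by ring

lemma Dbl.iter {D : ℝ≥0∞} {φ : ℝ → ℝ≥0∞} (h : Dbl D φ) (m : ℕ) :
    ∀ x y : ℝ, 0 < x → x ≤ y → y ≤ 2 ^ m * x → φ y ≤ D ^ m * φ x := by
  induction m with
  | zero =>
    intro x y hx h1 h2
    have : y = x := le_antisymm (by simpa using h2) h1
    simp [this]
  | succ m ih =>
    intro x y hx h1 h2
    have hz : 0 < max x (y / 2) := lt_max_of_lt_left hx
    have h3 : φ y ≤ D * φ (max x (y / 2)) := by
      apply h y _ (by linarith) hz
      · linarith [le_max_right x (y / 2)]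
      · apply max_le <;> linarith
    have h4 : φ (max x (y / 2)) ≤ D ^ m * φ x := by
      apply ih x _ hx (le_max_left _ _)
      apply max_le
      · exact le_mul_of_one_le_left hx.le (one_le_pow₀ (by norm_num))
      · rw [pow_succ] at h2; linarith
    calc φ y ≤ D * (D ^ m * φ x) := h3.trans (by gcongr)
      _ = _ := by ring

lemma chg {r : ℝ≥0∞} (hr : 0 < r) {α : ℝ} (hα : 0 < α) {ρ : ℝ → ℝ} (hρ : PW α ρ)
    {D : ℝ≥0∞} (hD : D ≠ ∞) :
    ∃ C : ℝ≥0∞, C ≠ ∞ ∧ ∀ Ψ : ℝ → ℝ≥0∞, Dbl D Ψ →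
      sl r (fun k : ℤ => Ψ ((2 : ℝ) ^ k)) ≤ C * sl r (fun k : ℤ => Ψ (ρ ((2 : ℝ) ^ k))) ∧
      sl r (fun k : ℤ => Ψ (ρ ((2 : ℝ) ^ k))) ≤ C * sl r (fun k : ℤ => Ψ ((2 : ℝ) ^ k)) := by
  have hL := Real.log_pos (show (1 : ℝ) < 2 by norm_num)
  set L := Real.log 2 with hLdef
  obtain ⟨c, hc⟩ := hρ.2 (α / 2) (by positivity)
  set l : ℤ → ℝ := fun k => Real.log (ρ ((2 : ℝ) ^ k)) with hl
  have hp : ∀ k : ℤ, 0 < ρ ((2 : ℝ) ^ k) := fun k => hρ.1 _ (by positivity)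
  have hcl : ∀ i j : ℤ, |l j - l i - α * ((j - i) * L)| ≤ c + α / 2 * (|((j : ℝ) - i)| * L) := by
    intro i j
    have := hc ((2 : ℝ) ^ i) ((2 : ℝ) ^ j) (by positivity) (by positivity)
    rw [Real.log_zpow, Real.log_zpow, ← sub_mul, abs_mul, abs_of_pos hL] at this
    exact this
  have hc0 : 0 ≤ c := by have := hcl 0 0; simpa using this
  have sep : ∀ i j : ℤ, α / 2 * (|((j : ℝ) - i)| * L) ≤ |l j - l i| + c := by
    intro i j
    have h1 := hcl i j
    have h2 : |α * (((j : ℝ) - i) * L)| = α * (|((j : ℝ) - i)| * L) := by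
      rw [abs_mul, abs_mul, abs_of_pos hα, abs_of_pos hL]
    have h3 := abs_sub_abs_le_abs_sub (α * (((j : ℝ) - i) * L)) (l j - l i)
    rw [abs_sub_comm (α * (((j : ℝ) - i) * L)) (l j - l i)] at h3
    linarith
  have log_le : ∀ {x y : ℝ}, 0 < x → 0 < y → Real.log x ≤ Real.log y → x ≤ y :=
    fun hx hy h => (Real.log_le_log_iff hx hy).1 h
  -- direction 2
  have hex : ∀ i : ℤ, ∃ n : ℤ, ρ ((2 : ℝ) ^ i) ∈ Ico ((2 : ℝ) ^ n) (2 ^ (n + 1)) :=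
    fun i => exists_mem_Ico_zpow (hp i) (one_lt_two (α := ℝ))
  choose e he using hex
  have hel : ∀ i, e i * L ≤ l i ∧ l i ≤ e i * L + L := by
    intro i
    have h1 := Real.log_le_log (by positivity) (he i).1
    have h2 := Real.log_le_log (hp i) (he i).2.le
    rw [Real.log_zpow] at h1 h2
    push_cast at h2
    exact ⟨h1, by simp only [hl]; linarith⟩
  set N : ℕ := ⌈2 * (c + L) / (α * L)⌉₊ with hN
  have heN : ∀ i j, e i = e j → |i - j| ≤ (N : ℤ) := by
    intro i j hij
    have h1 := hel i
    have h2 := hel j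
    rw [hij] at h1
    have h3 : |l j - l i| ≤ L := by rw [abs_le]; constructor <;> linarith
    have h4 := sep i j
    rw [abs_sub_comm] at h4
    have h5 : |(i : ℝ) - j| ≤ 2 * (c + L) / (α * L) := by
      rw [le_div_iff₀ (by positivity)]
      linarith
    have h6 : |(i : ℝ) - j| ≤ N := h5.trans (Nat.le_ceil _)
    exact_mod_cast h6
  obtain ⟨C2, hC2, hh2⟩ := sl_reindex hr N
  -- direction 1
  have hex1 : ∀ k : ℤ, ∃ j : ℤ, l j ≤ k * L ∧ k * L < l (j + 1) := by
    intro k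
    have hb : ∃ b : ℤ, ∀ z : ℤ, l z ≤ k * L → z ≤ b := by
      refine ⟨⌈2 * (|k * L - l 0| + c) / (α * L)⌉₊, fun z hz => ?_⟩
      by_contra hlt
      push Not at hlt
      have hz0 : (0 : ℝ) < z := by
        have : (0 : ℤ) < z := lt_of_le_of_lt (by positivity) hlt
        exact_mod_cast this
      have h1 := hcl 0 z
      simp only [Int.cast_zero, sub_zero] at h1
      rw [abs_of_pos hz0, abs_le] at h1
      have h2 : 2 * (|k * L - l 0| + c) / (α * L) < z := by
        refine lt_of_le_of_lt (Nat.le_ceil _) ?_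
        exact_mod_cast hlt
      rw [div_lt_iff₀ (by positivity)] at h2
      have h3 := le_abs_self (k * L - l 0)
      linarith [h1.1]
    have hi : ∃ z : ℤ, l z ≤ k * L := by
      refine ⟨-(⌈2 * (|k * L - l 0| + c) / (α * L)⌉₊ : ℕ), ?_⟩
      set n := ⌈2 * (|k * L - l 0| + c) / (α * L)⌉₊
      have h1 := hcl 0 (-(n : ℤ))
      simp only [Int.cast_zero, sub_zero, Int.cast_neg, Int.cast_natCast, abs_neg, Nat.abs_cast] at h1
      rw [abs_le] at h1
      have h2 : 2 * (|k * L - l 0| + c) / (α * L) ≤ n := Nat.le_ceil _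
      rw [div_le_iff₀ (by positivity)] at h2
      have h3 := neg_abs_le (k * L - l 0)
      linarith [h1.2]
    obtain ⟨j, hj1, hj2⟩ := Int.exists_greatest_of_bdd hb hi
    refine ⟨j, hj1, ?_⟩
    by_contra hlt
    push Not at hlt
    have := hj2 _ hlt
    omega
  choose g hg using hex1
  set B := 2 * α * L + c with hB
  have hgB : ∀ k : ℤ, k * L ≤ l (g k) + B := by
    intro k
    have h1 := (hg k).2
    have h2 := hcl (g k) (g k + 1)
    push_cast at h2
    rw [show ((g k : ℝ) + 1 - g k) = 1 by ring, abs_one, abs_le] at h2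
    have := mul_pos hα hL
    linarith [h2.2]
  set m : ℕ := ⌈B / L⌉₊ with hm
  have hmB : B ≤ m * L := by
    have : B / L ≤ m := Nat.le_ceil _
    rwa [div_le_iff₀ hL] at this
  have hgm : ∀ i j, g i = g j → |i - j| ≤ (m : ℤ) := by
    intro i j hij
    have h1 := hgB i
    have h2 := hgB j
    have h3 := (hg i).1
    have h4 := (hg j).1
    rw [hij] at h1 h3
    have h5 : |(i : ℝ) - j| ≤ m := by
      rw [abs_le]
      constructor <;> nlinarith
    exact_mod_cast h5
  obtain ⟨C1, hC1, hh1⟩ := sl_reindex hr m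
  refine ⟨D ^ m * C1 + D * C2, by finiteness, fun Ψ hΨ => ⟨?_, ?_⟩⟩
  · calc sl r (fun k : ℤ => Ψ ((2 : ℝ) ^ k))
        ≤ D ^ m * sl r (fun k : ℤ => Ψ (ρ ((2 : ℝ) ^ (g k)))) := by
          apply sl_le_const_mul hr
          intro k
          apply hΨ.iter m _ _ (hp _)
          · apply log_le (hp _) (by positivity)
            rw [Real.log_zpow]; exact (hg k).1
          · have := hp (g k)
            apply log_le (by positivity) (by positivity)
            rw [Real.log_zpow, Real.log_mul (by positivity) (by positivity), Real.log_pow]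
            have := hgB k
            simp only [hl] at this
            linarith
      _ ≤ D ^ m * (C1 * sl r (fun k : ℤ => Ψ (ρ ((2 : ℝ) ^ k)))) := by
          gcongr
          exact hh1 (fun k : ℤ => Ψ (ρ ((2 : ℝ) ^ k))) g hgm
      _ ≤ _ := by rw [← mul_assoc]; gcongr; exact le_self_add
  · calc sl r (fun k : ℤ => Ψ (ρ ((2 : ℝ) ^ k)))
        ≤ D * sl r (fun k : ℤ => Ψ ((2 : ℝ) ^ (e k))) := by
          apply sl_le_const_mul hr
          intro k
          have h1 := (he k).1
          have h2 := (he k).2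
          rw [zpow_add_one₀ (by norm_num)] at h2
          have h3 : (0 : ℝ) < 2 ^ (e k) := by positivity
          apply hΨ _ _ (hp k) h3 <;> linarith
      _ ≤ D * (C2 * sl r (fun k : ℤ => Ψ ((2 : ℝ) ^ k))) := by
          gcongr
          exact hh2 (fun k : ℤ => Ψ ((2 : ℝ) ^ k)) e heN
      _ ≤ _ := by rw [← mul_assoc]; gcongr; exact le_add_self

lemma LqNorm_congr (q : ℝ≥0∞) {s : Set ℝ} (hs : MeasurableSet s) {g g' : ℝ → ℝ≥0∞}
    (h : ∀ u ∈ s, g u = g' u) : LqNorm q s g = LqNorm q s g' := by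
  unfold LqNorm
  split_ifs
  · apply essSup_congr_ae
    filter_upwards [ae_restrict_mem hs] with u hu using h u hu
  · congr 1
    exact setLIntegral_congr_fun hs fun u hu => by simp only [h u hu]

lemma svWgt_itg (r : ℝ≥0∞) (β : ℝ → ℝ) {u : ℝ} (hu : 0 < u) :
    svWgt r β u = itg r (fun u => ENNReal.ofReal (β u)) u := by
  unfold svWgt itg
  exact ENNReal.ofReal_mul (by positivity)

lemma Lam {r : ℝ≥0∞} (hr : 0 < r) {β : ℝ → ℝ} (hβ : PW 0 β)
    (hfin : LqNorm r (Ioo 0 1) (svWgt r β) ≠ ∞) :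
    PW 0 (fun t => (LqNorm r (Ioo 0 t) (svWgt r β)).toReal) ∧
    ∃ C : ℝ≥0∞, C ≠ ∞ ∧ ∀ t : ℝ, 0 < t →
      ENNReal.ofReal (LqNorm r (Ioo 0 t) (svWgt r β)).toReal ≤
        C * sl r (fun j : ℕ => ENNReal.ofReal (β (t / 2 ^ j))) ∧
      sl r (fun j : ℕ => ENNReal.ofReal (β (t / 2 ^ j))) ≤
        C * ENNReal.ofReal (LqNorm r (Ioo 0 t) (svWgt r β)).toReal := by
  have hcg : ∀ t, LqNorm r (Ioo 0 t) (svWgt r β) = LqNorm r (Ioo 0 t) (itg r (fun u => ENNReal.ofReal (β u))) :=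
    fun t => LqNorm_congr r measurableSet_Ioo fun u hu => svWgt_itg r β hu.1
  simp_rw [hcg] at hfin ⊢
  obtain ⟨D, hD, hd⟩ := hβ.dbl
  obtain ⟨C, hC, hN⟩ := discN hr hD
  replace hN := hN _ hd
  set Λ := fun t => LqNorm r (Ioo 0 t) (itg r (fun u => ENNReal.ofReal (β u))) with hΛ
  have key : ∀ ε : ℝ, 0 < ε → ∃ c : ℝ, ∀ x y : ℝ, 0 < x → 0 < y →
      Λ x ≤ ENNReal.ofReal (Real.exp (c + ε * |Real.log y - Real.log x|)) * Λ y := by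
    intro ε hε
    obtain ⟨c, hc⟩ := hβ.2 ε hε
    refine ⟨c + Real.log (C.toReal * C.toReal + 1), fun x y hx hy => ?_⟩
    have hs : sl r (fun j : ℕ => ENNReal.ofReal (β (x / 2 ^ j))) ≤
        ENNReal.ofReal (Real.exp (c + ε * |Real.log y - Real.log x|)) *
          sl r (fun j : ℕ => ENNReal.ofReal (β (y / 2 ^ j))) := by
      apply sl_le_const_mul hr
      intro j
      have hxj : 0 < x / 2 ^ j := by positivity
      have hyj : 0 < y / 2 ^ j := by positivity
      have h1 := hc _ _ hxj hyj
      rw [Real.exp_add, ENNReal.ofReal_mul (by positivity)]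
      apply ofReal_le_of_log (hβ.1 _ hxj) (hβ.1 _ hyj)
      rw [Real.log_div hx.ne' (by positivity), Real.log_div hy.ne' (by positivity), zero_mul, sub_zero,
        sub_sub_sub_cancel_right, abs_le] at h1
      linarith [h1.1]
    calc Λ x ≤ C * _ := (hN x hx).1
      _ ≤ C * (ENNReal.ofReal (Real.exp (c + ε * |Real.log y - Real.log x|)) * (C * Λ y)) := by
          gcongr
          refine hs.trans ?_
          gcongr
          exact (hN y hy).2
      _ = (C * C * ENNReal.ofReal (Real.exp (c + ε * |Real.log y - Real.log x|))) * Λ y := by ring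
      _ ≤ _ := by
          gcongr
          rw [add_right_comm, add_comm, Real.exp_add _ (Real.log _), Real.exp_log (by positivity), mul_comm (Real.exp _),
            ENNReal.ofReal_mul (by positivity)]
          gcongr
          rw [← ENNReal.ofReal_toReal (show C * C ≠ ∞ by finiteness), ENNReal.toReal_mul]
          apply ENNReal.ofReal_le_ofReal; linarith
  have hfinall : ∀ t, 0 < t → Λ t ≠ ∞ := by
    intro t ht
    obtain ⟨c, hc⟩ := key 1 one_pos
    exact ne_top_of_le_ne_top (ENNReal.mul_ne_top ENNReal.ofReal_ne_top hfin) (hc t 1 ht one_pos)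
  have hpos : ∀ t, 0 < t → 0 < (Λ t).toReal := by
    intro t ht
    apply ENNReal.toReal_pos _ (hfinall t ht)
    intro h0
    have h1 := (hN t ht).2
    have h2 := le_sl hr (fun j : ℕ => ENNReal.ofReal (β (t / 2 ^ j))) 0
    change _ ≤ C * Λ t at h1
    rw [h0, mul_zero] at h1
    have h3 := h2.trans h1
    simp only [pow_zero, div_one, nonpos_iff_eq_zero, ENNReal.ofReal_eq_zero] at h3
    linarith [hβ.1 t ht]
  refine ⟨⟨hpos, fun ε hε => ?_⟩, C, hC, fun t ht => ?_⟩
  · obtain ⟨c, hc⟩ := key ε hε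
    have key2 : ∀ x y : ℝ, 0 < x → 0 < y → Real.log (Λ x).toReal ≤ c + ε * |Real.log y - Real.log x| + Real.log (Λ y).toReal := by
      intro x y hx hy
      have h1 := ENNReal.toReal_mono (ENNReal.mul_ne_top ENNReal.ofReal_ne_top (hfinall y hy)) (hc x y hx hy)
      rw [ENNReal.toReal_mul, ENNReal.toReal_ofReal (by positivity)] at h1
      have h2 := Real.log_le_log (hpos x hx) h1
      rwa [Real.log_mul (by positivity) (hpos y hy).ne', Real.log_exp] at h2
    refine ⟨c, fun x y hx hy => ?_⟩
    have h1 := key2 x y hx hy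
    have h2 := key2 y x hy hx
    rw [abs_sub_comm (Real.log x)] at h2
    rw [zero_mul, sub_zero, abs_le]
    constructor <;> linarith
  · rw [ENNReal.ofReal_toReal (hfinall t ht)]
    exact hN t ht


set_option linter.unusedSectionVars false

lemma Kf_mono (N₀ N₁ : E → ℝ≥0∞) (f : E) {x y : ℝ} (h : x ≤ y) : Kf N₀ N₁ x f ≤ Kf N₀ N₁ y f := by
  unfold Kf
  exact iInf_mono fun g => by gcongr

lemma Kf_le_two (N₀ N₁ : E → ℝ≥0∞) (f : E) {x y : ℝ} (h : x ≤ 2 * y) :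
    Kf N₀ N₁ x f ≤ 2 * Kf N₀ N₁ y f := by
  unfold Kf
  rw [ENNReal.mul_iInf_of_ne (by norm_num) (by norm_num)]
  refine iInf_mono fun g => ?_
  have : ENNReal.ofReal x ≤ 2 * ENNReal.ofReal y := by
    rw [show (2 : ℝ≥0∞) = ENNReal.ofReal 2 by simp, ← ENNReal.ofReal_mul (by norm_num)]
    exact ENNReal.ofReal_le_ofReal h
  calc _ ≤ 2 * N₀ g + 2 * ENNReal.ofReal y * N₁ (f - g) := by
        gcongr
        exact le_mul_of_one_le_left (zero_le) (by norm_num)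
    _ = _ := by ring

lemma Kf_dbl (N₀ N₁ : E → ℝ≥0∞) (f : E) : Dbl 2 (fun t => Kf N₀ N₁ t f) :=
  fun x y _ _ h _ => Kf_le_two N₀ N₁ f h

lemma QuasiBanach.neg (A : QuasiBanach E) (x : E) : A.N (-x) = A.N x := by
  have := A.smul (-1) x
  simpa using this

lemma Kf_add (A₀ A₁ : QuasiBanach E) : ∃ C : ℝ≥0∞, C ≠ ∞ ∧ ∀ (t : ℝ) (f g : E),
    Kf A₀.N A₁.N t (f + g) ≤ C * (Kf A₀.N A₁.N t f + Kf A₀.N A₁.N t g) := by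
  obtain ⟨C₀, h1, h2, h3⟩ := A₀.quasi
  obtain ⟨C₁, k1, k2, k3⟩ := A₁.quasi
  have hne : C₀ + C₁ ≠ 0 := by
    intro h
    rw [add_eq_zero] at h
    rw [h.1] at h1; simp at h1
  refine ⟨C₀ + C₁, by finiteness, fun t f g => ?_⟩
  unfold Kf
  rw [← ENNReal.div_le_iff' hne (by finiteness)]
  apply ENNReal.le_iInf_add_iInf
  intro i j
  rw [ENNReal.div_le_iff' hne (by finiteness)]
  refine iInf_le_of_le (i + j) ?_
  have e : f + g - (i + j) = (f - i) + (g - j) := by abel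
  rw [e]
  calc _ ≤ (C₀ + C₁) * (A₀.N i + A₀.N j) + ENNReal.ofReal t * ((C₀ + C₁) * (A₁.N (f - i) + A₁.N (g - j))) := by
        gcongr
        · exact (h3 i j).trans (by gcongr; exact le_self_add)
        · exact (k3 _ _).trans (by gcongr; exact le_add_self)
    _ = _ := by ring

/-- weighted K-functional -/
def Wk (N₀ N₁ : E → ℝ≥0∞) (V : ℝ → ℝ) (f : E) : ℝ → ℝ≥0∞ :=
  fun u => ENNReal.ofReal (V u) * Kf N₀ N₁ u f

def Qf (N₀ N₁ : E → ℝ≥0∞) (q : ℝ≥0∞) (V : ℝ → ℝ) (f : E) (t : ℝ) : ℝ≥0∞ :=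
  LqNorm q (Ioi t) (itg q (Wk N₀ N₁ V f))

def If (N₀ N₁ : E → ℝ≥0∞) (q : ℝ≥0∞) (V : ℝ → ℝ) (f : E) (t : ℝ) : ℝ≥0∞ :=
  LqNorm q (Ioo 0 t) (itg q (Wk N₀ N₁ V f))

def X0 (N₀ N₁ : E → ℝ≥0∞) (q : ℝ≥0∞) (V : ℝ → ℝ) (f : E) : ℝ≥0∞ :=
  LqNorm q (Ioi 0) (itg q (Wk N₀ N₁ V f))

def X1 (N₀ N₁ : E → ℝ≥0∞) (r q : ℝ≥0∞) (β V : ℝ → ℝ) (f : E) : ℝ≥0∞ :=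
  LqNorm r (Ioi 0) (itg r (fun t => ENNReal.ofReal (β t) * Qf N₀ N₁ q V f t))

lemma Wk_dbl {α : ℝ} {V : ℝ → ℝ} (hV : PW α V) (N₀ N₁ : E → ℝ≥0∞) :
    ∃ D : ℝ≥0∞, D ≠ ∞ ∧ ∀ f, Dbl D (Wk N₀ N₁ V f) := by
  obtain ⟨D, hD, hd⟩ := hV.dbl
  exact ⟨D * 2, by finiteness, fun f => hd.mul (Kf_dbl N₀ N₁ f)⟩

lemma Qf_disc {q : ℝ≥0∞} (hq : 0 < q) {α : ℝ} {V : ℝ → ℝ} (hV : PW α V) (N₀ N₁ : E → ℝ≥0∞) :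
    ∃ C : ℝ≥0∞, C ≠ ∞ ∧ ∀ f t, 0 < t →
      Qf N₀ N₁ q V f t ≤ C * sl q (fun k : ℕ => Wk N₀ N₁ V f ((2 : ℝ) ^ k * t)) ∧
      sl q (fun k : ℕ => Wk N₀ N₁ V f ((2 : ℝ) ^ k * t)) ≤ C * Qf N₀ N₁ q V f t := by
  obtain ⟨D, hD, hd⟩ := Wk_dbl hV N₀ N₁
  obtain ⟨C, hC, h⟩ := discP hq hD
  exact ⟨C, hC, fun f t ht => h _ (hd f) t ht⟩

lemma If_disc {q : ℝ≥0∞} (hq : 0 < q) {α : ℝ} {V : ℝ → ℝ} (hV : PW α V) (N₀ N₁ : E → ℝ≥0∞) :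
    ∃ C : ℝ≥0∞, C ≠ ∞ ∧ ∀ f t, 0 < t →
      If N₀ N₁ q V f t ≤ C * sl q (fun k : ℕ => Wk N₀ N₁ V f (t / (2 : ℝ) ^ k)) ∧
      sl q (fun k : ℕ => Wk N₀ N₁ V f (t / (2 : ℝ) ^ k)) ≤ C * If N₀ N₁ q V f t := by
  obtain ⟨D, hD, hd⟩ := Wk_dbl hV N₀ N₁
  obtain ⟨C, hC, h⟩ := discN hq hD
  exact ⟨C, hC, fun f t ht => h _ (hd f) t ht⟩

lemma Qf_dbl {q : ℝ≥0∞} (hq : 0 < q) {α : ℝ} {V : ℝ → ℝ} (hV : PW α V) (N₀ N₁ : E → ℝ≥0∞) :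
    ∃ D : ℝ≥0∞, D ≠ ∞ ∧ ∀ f, Dbl D (Qf N₀ N₁ q V f) := by
  obtain ⟨D, hD, hd⟩ := Wk_dbl hV N₀ N₁
  obtain ⟨C, hC, h⟩ := Qf_disc hq hV N₀ N₁
  refine ⟨C * D * C, by finiteness, fun f x y hx hy h1 h2 => ?_⟩
  calc _ ≤ _ := (h f x hx).1
    _ ≤ C * (D * sl q (fun k : ℕ => Wk N₀ N₁ V f ((2 : ℝ) ^ k * y))) := by
        gcongr
        refine sl_le_const_mul hq fun k => hd f _ _ (by positivity) (by positivity) ?_ ?_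
        · rw [mul_left_comm]; gcongr
        · rw [mul_left_comm]; gcongr
    _ ≤ C * (D * (C * Qf N₀ N₁ q V f y)) := by gcongr; exact (h f y hy).2
    _ = _ := by ring

lemma If_dbl {q : ℝ≥0∞} (hq : 0 < q) {α : ℝ} {V : ℝ → ℝ} (hV : PW α V) (N₀ N₁ : E → ℝ≥0∞) :
    ∃ D : ℝ≥0∞, D ≠ ∞ ∧ ∀ f, Dbl D (If N₀ N₁ q V f) := by
  obtain ⟨D, hD, hd⟩ := Wk_dbl hV N₀ N₁
  obtain ⟨C, hC, h⟩ := If_disc hq hV N₀ N₁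
  refine ⟨C * D * C, by finiteness, fun f x y hx hy h1 h2 => ?_⟩
  calc _ ≤ _ := (h f x hx).1
    _ ≤ C * (D * sl q (fun k : ℕ => Wk N₀ N₁ V f (y / (2 : ℝ) ^ k))) := by
        gcongr
        refine sl_le_const_mul hq fun k => hd f _ _ (by positivity) (by positivity) ?_ ?_
        · rw [mul_div_assoc']; gcongr
        · rw [mul_div_assoc']; gcongr
    _ ≤ C * (D * (C * If N₀ N₁ q V f y)) := by gcongr; exact (h f y hy).2
    _ = _ := by ring

lemma sl_geom_le {q : ℝ≥0∞} (hq : 0 < q) {δ : ℝ} (hδ : 0 < δ) :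
    ∃ S : ℝ≥0∞, S ≠ ∞ ∧ ∀ (x : ℕ → ℝ≥0∞) (z : ℝ≥0∞),
      (∀ j, x j ≤ ENNReal.ofReal (((2 : ℝ) ^ (-δ)) ^ j) * z) → sl q x ≤ S * z := by
  have h1 : (2 : ℝ) ^ (-δ) < 1 := Real.rpow_lt_one_of_one_lt_of_neg (by norm_num) (by linarith)
  refine ⟨_, sl_geom hq (by positivity) h1, fun x z h => ?_⟩
  rw [← sl_mul_const hq]
  exact sl_mono q h

lemma PW.decay' {α : ℝ} {w : ℝ → ℝ} (hw : PW α w) {δ : ℝ} (hδ : δ < α) :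
    ∃ C : ℝ≥0∞, C ≠ ∞ ∧ ∀ (t : ℝ) (j : ℕ), 0 < t →
      ENNReal.ofReal (w (t / 2 ^ j)) ≤ C * ENNReal.ofReal (((2 : ℝ) ^ (-δ)) ^ j) * ENNReal.ofReal (w t) := by
  obtain ⟨C, hC, h⟩ := hw.decay hδ
  refine ⟨C, hC, fun t j ht => ?_⟩
  have := h (t / 2 ^ j) j (by positivity)
  rwa [mul_div_cancel₀ t (by positivity)] at this

lemma PW.growth' {α : ℝ} {w : ℝ → ℝ} (hw : PW α w) {δ : ℝ} (hδ : α < δ) :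
    ∃ C : ℝ≥0∞, C ≠ ∞ ∧ ∀ (t : ℝ) (j : ℕ), 0 < t →
      ENNReal.ofReal (w t) ≤ C * ENNReal.ofReal (((2 : ℝ) ^ δ) ^ j) * ENNReal.ofReal (w (t / 2 ^ j)) := by
  obtain ⟨C, hC, h⟩ := hw.growth hδ
  refine ⟨C, hC, fun t j ht => ?_⟩
  have := h (t / 2 ^ j) j (by positivity)
  rwa [mul_div_cancel₀ t (by positivity)] at this


lemma le_const_mul_iInf {ι : Type*} {C a : ℝ≥0∞} (hC : C ≠ ∞) {F : ι → ℝ≥0∞}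
    (h : ∀ i, a ≤ C * F i) : a ≤ (C + 1) * ⨅ i, F i := by
  rw [ENNReal.mul_iInf_of_ne (by simp) (by finiteness)]
  exact le_iInf fun i => (h i).trans (by gcongr; exact le_self_add)

lemma PW.decay_lin {α : ℝ} {V : ℝ → ℝ} (hV : PW α V) (hα : -1 < α) :
    ∃ C : ℝ≥0∞, C ≠ ∞ ∧ ∀ (t : ℝ) (j : ℕ), 0 < t →
      ENNReal.ofReal (V (t / 2 ^ j)) * ENNReal.ofReal (1 / 2 ^ j) ≤
        C * ENNReal.ofReal (((2 : ℝ) ^ (-((α + 1) / 2))) ^ j) * ENNReal.ofReal (V t) := by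
  obtain ⟨C, hC, h⟩ := hV.decay' (δ := (α - 1) / 2) (by linarith)
  refine ⟨C, hC, fun t j ht => ?_⟩
  have e : ((2 : ℝ) ^ (-((α + 1) / 2))) ^ j = ((2 : ℝ) ^ (-((α - 1) / 2))) ^ j * (1 / 2 ^ j) := by
    rw [show -((α + 1) / 2) = -((α - 1) / 2) + (-1) by ring, Real.rpow_add (by norm_num),
      Real.rpow_neg_one, mul_pow, inv_pow, one_div]
  rw [e, ENNReal.ofReal_mul (by positivity)]
  calc _ ≤ _ := mul_le_mul_left (h t j ht) _
    _ = _ := by ring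

lemma Kf_le_left (A₀ A₁ : QuasiBanach E) (u : ℝ) (g : E) : Kf A₀.N A₁.N u g ≤ A₀.N g := by
  refine iInf_le_of_le g ?_
  simp [A₁.zero]

lemma Kf_le_right (A₀ A₁ : QuasiBanach E) (u : ℝ) (g : E) :
    Kf A₀.N A₁.N u g ≤ ENNReal.ofReal u * A₁.N g := by
  refine iInf_le_of_le 0 ?_
  simp [A₀.zero]

lemma Wk_le_Qf {q : ℝ≥0∞} (hq : 0 < q) {α : ℝ} {V : ℝ → ℝ} (hV : PW α V) (N₀ N₁ : E → ℝ≥0∞) :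
    ∃ C : ℝ≥0∞, C ≠ ∞ ∧ ∀ f t, 0 < t → Wk N₀ N₁ V f t ≤ C * Qf N₀ N₁ q V f t := by
  obtain ⟨C, hC, h⟩ := Qf_disc hq hV N₀ N₁
  refine ⟨C, hC, fun f t ht => le_trans ?_ (h f t ht).2⟩
  have := le_sl hq (fun k : ℕ => Wk N₀ N₁ V f ((2 : ℝ) ^ k * t)) 0
  simpa using this

lemma Wk_le_If {q : ℝ≥0∞} (hq : 0 < q) {α : ℝ} {V : ℝ → ℝ} (hV : PW α V) (N₀ N₁ : E → ℝ≥0∞) :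
    ∃ C : ℝ≥0∞, C ≠ ∞ ∧ ∀ f t, 0 < t → Wk N₀ N₁ V f t ≤ C * If N₀ N₁ q V f t := by
  obtain ⟨C, hC, h⟩ := If_disc hq hV N₀ N₁
  refine ⟨C, hC, fun f t ht => le_trans ?_ (h f t ht).2⟩
  have := le_sl hq (fun k : ℕ => Wk N₀ N₁ V f (t / (2 : ℝ) ^ k)) 0
  simpa using this

lemma lower (A₀ A₁ : QuasiBanach E) {q₁ r₀ r₁ : ℝ≥0∞} (hq₁ : 0 < q₁) (hr₀ : 0 < r₀) (hr₁ : 0 < r₁)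
    {V₀ V₁ β Λ ρ : ℝ → ℝ} {α₀ α₁ γ : ℝ} (hV₀ : PW α₀ V₀) (hV₁ : PW α₁ V₁) (hβ : PW 0 β)
    (hΛ : PW 0 Λ) (hρ : PW γ ρ) (hγ : 0 < γ)
    (hΛs : ∃ C : ℝ≥0∞, C ≠ ∞ ∧ ∀ t : ℝ, 0 < t →
      ENNReal.ofReal (Λ t) ≤ C * sl r₁ (fun j : ℕ => ENNReal.ofReal (β (t / 2 ^ j))) ∧
      sl r₁ (fun j : ℕ => ENNReal.ofReal (β (t / 2 ^ j))) ≤ C * ENNReal.ofReal (Λ t))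
    (hid : ∀ t, 0 < t → V₀ t = ρ t * (Λ t * V₁ t)) :
    ∃ C : ℝ≥0∞, C ≠ ∞ ∧ ∀ f t, 0 < t → If A₀.N A₁.N r₀ V₀ f t ≤
      C * Kf (X0 A₀.N A₁.N r₀ V₀) (X1 A₀.N A₁.N r₁ q₁ β V₁) (ρ t) f := by
  obtain ⟨Cl, hCl, hl⟩ := hΛs
  obtain ⟨Ck, hCk, hk⟩ := Kf_add A₀ A₁
  obtain ⟨Cs, hCs, hs⟩ := sl_add hr₀
  obtain ⟨Ci, hCi, hi⟩ := If_disc hr₀ hV₀ A₀.N A₁.N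
  obtain ⟨Cq, hCq, hq⟩ := Wk_le_Qf hq₁ hV₁ A₀.N A₁.N
  obtain ⟨Dq, hDq, hdq⟩ := Qf_dbl hq₁ hV₁ A₀.N A₁.N
  obtain ⟨Db, hDb, hdb⟩ := hβ.dbl
  obtain ⟨Cn, hCn, hn⟩ := discN hr₁ (D := Db * Dq) (by finiteness)
  obtain ⟨Cr, hCr, hr⟩ := hρ.decay' (δ := γ / 2) (by linarith)
  obtain ⟨S, hS, hgeo⟩ := sl_geom_le hr₀ (δ := γ / 2) (by linarith)
  have stepa : ∀ h u, 0 < u → ENNReal.ofReal (Λ u) * Qf A₀.N A₁.N q₁ V₁ h u ≤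
      Cl * Cn * X1 A₀.N A₁.N r₁ q₁ β V₁ h := by
    intro h u hu
    calc _ ≤ Cl * sl r₁ (fun j : ℕ => ENNReal.ofReal (β (u / 2 ^ j))) * Qf A₀.N A₁.N q₁ V₁ h u := by
          gcongr; exact (hl u hu).1
      _ = Cl * sl r₁ (fun j : ℕ => ENNReal.ofReal (β (u / 2 ^ j)) * Qf A₀.N A₁.N q₁ V₁ h u) := by
          rw [sl_mul_const hr₁, mul_assoc]
      _ ≤ Cl * sl r₁ (fun j : ℕ => ENNReal.ofReal (β (u / 2 ^ j)) * Qf A₀.N A₁.N q₁ V₁ h (u / 2 ^ j)) := by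
          gcongr
          refine sl_mono _ fun j => ?_
          gcongr
          refine LqNorm_mono_set _ (Ioi_subset_Ioi ?_) _
          exact div_le_self hu.le (one_le_pow₀ (by norm_num))
      _ ≤ Cl * (Cn * LqNorm r₁ (Ioo 0 u) (itg r₁ (fun t => ENNReal.ofReal (β t) * Qf A₀.N A₁.N q₁ V₁ h t))) := by
          gcongr
          exact (hn _ (hdb.mul (hdq h)) u hu).2
      _ ≤ Cl * (Cn * X1 A₀.N A₁.N r₁ q₁ β V₁ h) := by
          gcongr
          exact LqNorm_mono_set _ Ioo_subset_Ioi_self _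
      _ = _ := by ring
  have stepb : ∀ h u, 0 < u → Wk A₀.N A₁.N V₀ h u ≤
      Cq * Cl * Cn * (ENNReal.ofReal (ρ u) * X1 A₀.N A₁.N r₁ q₁ β V₁ h) := by
    intro h u hu
    have h1 := hρ.1 u hu
    have h2 := hΛ.1 u hu
    calc Wk A₀.N A₁.N V₀ h u = ENNReal.ofReal (ρ u) * (ENNReal.ofReal (Λ u) * Wk A₀.N A₁.N V₁ h u) := by
          unfold Wk
          rw [hid u hu, ENNReal.ofReal_mul h1.le, ENNReal.ofReal_mul h2.le]; ring
      _ ≤ ENNReal.ofReal (ρ u) * (ENNReal.ofReal (Λ u) * (Cq * Qf A₀.N A₁.N q₁ V₁ h u)) := by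
          gcongr; exact hq h u hu
      _ = ENNReal.ofReal (ρ u) * Cq * (ENNReal.ofReal (Λ u) * Qf A₀.N A₁.N q₁ V₁ h u) := by ring
      _ ≤ ENNReal.ofReal (ρ u) * Cq * (Cl * Cn * X1 A₀.N A₁.N r₁ q₁ β V₁ h) := by
          exact mul_le_mul_right (stepa h u hu) _
      _ = _ := by ring
  have stepc : ∀ h t, 0 < t → If A₀.N A₁.N r₀ V₀ h t ≤
      Ci * (S * (Cq * Cl * Cn * Cr)) * (ENNReal.ofReal (ρ t) * X1 A₀.N A₁.N r₁ q₁ β V₁ h) := by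
    intro h t ht
    calc _ ≤ _ := (hi h t ht).1
      _ ≤ Ci * (S * (Cq * Cl * Cn * Cr * (ENNReal.ofReal (ρ t) * X1 A₀.N A₁.N r₁ q₁ β V₁ h))) := by
          gcongr
          apply hgeo
          intro j
          calc _ ≤ _ := stepb h (t / 2 ^ j) (by positivity)
            _ ≤ Cq * Cl * Cn * ((Cr * ENNReal.ofReal (((2 : ℝ) ^ (-(γ / 2))) ^ j) * ENNReal.ofReal (ρ t)) * X1 A₀.N A₁.N r₁ q₁ β V₁ h) := by
                gcongr
                exact hr t j ht
            _ = _ := by ring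
      _ = _ := by ring
  have stepd : ∀ g h t, 0 < t → If A₀.N A₁.N r₀ V₀ (g + h) t ≤
      Ci * Ck * Cs * Ci * (If A₀.N A₁.N r₀ V₀ g t + If A₀.N A₁.N r₀ V₀ h t) := by
    intro g h t ht
    calc _ ≤ _ := (hi (g + h) t ht).1
      _ ≤ Ci * (Ck * sl r₀ (fun k : ℕ => Wk A₀.N A₁.N V₀ g (t / (2 : ℝ) ^ k) + Wk A₀.N A₁.N V₀ h (t / (2 : ℝ) ^ k))) := by
          gcongr
          refine sl_le_const_mul hr₀ fun k => ?_
          unfold Wk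
          calc _ ≤ ENNReal.ofReal (V₀ (t / 2 ^ k)) * (Ck * (Kf A₀.N A₁.N (t / 2 ^ k) g + Kf A₀.N A₁.N (t / 2 ^ k) h)) := by
                gcongr; exact hk _ _ _
            _ = _ := by ring
      _ ≤ Ci * (Ck * (Cs * (Ci * If A₀.N A₁.N r₀ V₀ g t + Ci * If A₀.N A₁.N r₀ V₀ h t))) := by
          gcongr
          refine (hs _ _ _).trans ?_
          gcongr
          · exact (hi g t ht).2
          · exact (hi h t ht).2
      _ = _ := by ring
  set C1 := Ci * (S * (Cq * Cl * Cn * Cr)) with hC1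
  set C2 := Ci * Ck * Cs * Ci with hC2
  have f1 : C1 ≠ ∞ := by finiteness
  have f2 : C2 ≠ ∞ := by finiteness
  refine ⟨C2 * (C1 + 1) + 1, by finiteness, fun f t ht => ?_⟩
  refine le_const_mul_iInf (by finiteness) fun g => ?_
  calc If A₀.N A₁.N r₀ V₀ f t = If A₀.N A₁.N r₀ V₀ (g + (f - g)) t := by rw [add_sub_cancel]
    _ ≤ _ := stepd g (f - g) t ht
    _ ≤ C2 * ((C1 + 1) * X0 A₀.N A₁.N r₀ V₀ g + (C1 + 1) * (ENNReal.ofReal (ρ t) * X1 A₀.N A₁.N r₁ q₁ β V₁ (f - g))) := by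
        gcongr
        · calc _ ≤ X0 A₀.N A₁.N r₀ V₀ g := LqNorm_mono_set _ Ioo_subset_Ioi_self _
            _ ≤ _ := le_mul_of_one_le_left (zero_le) le_add_self
        · exact (stepc (f - g) t ht).trans (by gcongr; exact le_self_add)
    _ = _ := by ring

lemma upper (A₀ A₁ : QuasiBanach E) {q₁ r₀ r₁ : ℝ≥0∞} (hq₁ : 0 < q₁) (hr₀ : 0 < r₀) (hr₁ : 0 < r₁)
    {V₀ V₁ β Λ ρ : ℝ → ℝ} {α₀ α₁ : ℝ} (hα₀ : α₀ < 0) (hα₀' : -1 < α₀) (hα₁ : α₁ < 0) (hα₁' : -1 < α₁)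
    (hV₀ : PW α₀ V₀) (hV₁ : PW α₁ V₁) (hβ : PW 0 β)
    (hΛ : PW 0 Λ) (hρ : ∀ t, 0 < t → 0 < ρ t)
    (hΛs : ∃ C : ℝ≥0∞, C ≠ ∞ ∧ ∀ t : ℝ, 0 < t →
      ENNReal.ofReal (Λ t) ≤ C * sl r₁ (fun j : ℕ => ENNReal.ofReal (β (t / 2 ^ j))) ∧
      sl r₁ (fun j : ℕ => ENNReal.ofReal (β (t / 2 ^ j))) ≤ C * ENNReal.ofReal (Λ t))
    (hid : ∀ t, 0 < t → V₀ t = ρ t * (Λ t * V₁ t)) :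
    ∃ C : ℝ≥0∞, C ≠ ∞ ∧ ∀ f t, 0 < t →
      Kf (X0 A₀.N A₁.N r₀ V₀) (X1 A₀.N A₁.N r₁ q₁ β V₁) (ρ t) f ≤ 
      C * (If A₀.N A₁.N r₀ V₀ f t + Wk A₀.N A₁.N V₀ f t + ENNReal.ofReal (ρ t) *
        (sl r₁ (fun j : ℕ => ENNReal.ofReal (β (2 ^ j * t)) * Qf A₀.N A₁.N q₁ V₁ f (2 ^ j * t)) +
          ENNReal.ofReal (Λ t) * Qf A₀.N A₁.N q₁ V₁ f t)) := by
  obtain ⟨Cl, hCl, hl⟩ := hΛs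
  obtain ⟨Ck, hCk, hk⟩ := Kf_add A₀ A₁
  obtain ⟨Cs, hCs, hs⟩ := sl_add hr₀
  obtain ⟨Cs1, hCs1, hs1⟩ := sl_add hr₁
  obtain ⟨Csq, hCsq, hsq⟩ := sl_add hq₁
  obtain ⟨Ci, hCi, hi⟩ := If_disc hr₀ hV₀ A₀.N A₁.N
  obtain ⟨Cj, hCj, hj⟩ := Qf_disc hr₀ hV₀ A₀.N A₁.N
  obtain ⟨Ci1, hCi1, hi1⟩ := If_disc hq₁ hV₁ A₀.N A₁.N
  obtain ⟨Cj1, hCj1, hj1⟩ := Qf_disc hq₁ hV₁ A₀.N A₁.N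
  obtain ⟨Dq, hDq, hdq⟩ := Qf_dbl hq₁ hV₁ A₀.N A₁.N
  obtain ⟨Db, hDb, hdb⟩ := hβ.dbl
  obtain ⟨Cn, hCn, hn⟩ := discN hr₁ (D := Db * Dq) (by finiteness)
  obtain ⟨Cp, hCp, hp⟩ := discP hr₁ (D := Db * Dq) (by finiteness)
  obtain ⟨Ct0, hCt0, ht0⟩ := LqNorm_split hr₀
  obtain ⟨Ct1, hCt1, ht1⟩ := LqNorm_split hr₁
  obtain ⟨Ctq, hCtq, htq⟩ := LqNorm_split hq₁
  obtain ⟨Cd0, hCd0, hd0⟩ := hV₀.decay_lin hα₀'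
  obtain ⟨Cd1, hCd1, hd1⟩ := hV₁.decay_lin hα₁'
  obtain ⟨Cg0, hCg0, hg0⟩ := hV₀.growth (δ := -(-α₀ / 2)) (by linarith)
  obtain ⟨Cg1, hCg1, hg1⟩ := hV₁.growth (δ := -(-α₁ / 2)) (by linarith)
  have hβV : PW (0 + α₁) (fun t => β t * V₁ t) := hβ.mul hV₁
  obtain ⟨Cg2, hCg2, hg2⟩ := hβV.growth (δ := -(-α₁ / 2)) (by linarith)
  obtain ⟨S0, hS0, geo0⟩ := sl_geom_le hr₀ (δ := (α₀ + 1) / 2) (by linarith)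
  obtain ⟨S1, hS1, geo1⟩ := sl_geom_le hq₁ (δ := (α₁ + 1) / 2) (by linarith)
  obtain ⟨T0, hT0, hgt0⟩ := sl_geom_le hr₀ (δ := -α₀ / 2) (by linarith)
  obtain ⟨T1, hT1, hgt1⟩ := sl_geom_le hq₁ (δ := -α₁ / 2) (by linarith)
  obtain ⟨T2, hT2, hgt2⟩ := sl_geom_le hr₁ (δ := -α₁ / 2) (by linarith)
  -- bounds on the K-functionals of the pieces
  have kg2 : ∀ u g h, Kf A₀.N A₁.N u g ≤ Ck * (Kf A₀.N A₁.N u (g + h) + ENNReal.ofReal u * A₁.N h) := by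
    intro u g h
    calc Kf A₀.N A₁.N u g = Kf A₀.N A₁.N u ((g + h) + (-h)) := by rw [add_neg_cancel_right]
      _ ≤ _ := hk _ _ _
      _ ≤ _ := by
        gcongr
        rw [← A₁.neg h]; exact Kf_le_right A₀ A₁ u (-h)
  have kh2 : ∀ u g h, Kf A₀.N A₁.N u h ≤ Ck * (Kf A₀.N A₁.N u (g + h) + A₀.N g) := by
    intro u g h
    calc Kf A₀.N A₁.N u h = Kf A₀.N A₁.N u ((g + h) + (-g)) := by rw [add_comm g, add_neg_cancel_right]
      _ ≤ _ := hk _ _ _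
      _ ≤ _ := by
        gcongr
        rw [← A₀.neg g]; exact Kf_le_left A₀ A₁ u (-g)
  have hsc : ∀ t (j : ℕ) (h : E), 0 < t → ENNReal.ofReal (t / 2 ^ j) * A₁.N h =
      ENNReal.ofReal (1 / 2 ^ j) * (ENNReal.ofReal t * A₁.N h) := by
    intro t j h ht
    rw [← mul_assoc, ← ENNReal.ofReal_mul (by positivity)]
    congr 2; ring
  have u1 : ∃ C : ℝ≥0∞, C ≠ ∞ ∧ ∀ g h t M, 0 < t → A₀.N g ≤ M → ENNReal.ofReal t * A₁.N h ≤ M →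
      X0 A₀.N A₁.N r₀ V₀ g ≤ C * (If A₀.N A₁.N r₀ V₀ (g + h) t + ENNReal.ofReal (V₀ t) * M) := by
    refine ⟨Ct0 * (Ci * (Ck * (Cs * (Ci + S0 * Cd0))) + Cj * (T0 * Cg0)), by finiteness,
      fun g h t M ht hM1 hM2 => ?_⟩
    have e1 : If A₀.N A₁.N r₀ V₀ g t ≤ Ci * (Ck * (Cs * (Ci * If A₀.N A₁.N r₀ V₀ (g + h) t + S0 * (Cd0 * (ENNReal.ofReal (V₀ t) * M))))) := by
      calc _ ≤ _ := (hi g t ht).1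
        _ ≤ Ci * (Ck * sl r₀ (fun k : ℕ => Wk A₀.N A₁.N V₀ (g + h) (t / 2 ^ k) +
              ENNReal.ofReal (V₀ (t / 2 ^ k)) * ENNReal.ofReal (1 / 2 ^ k) * M)) := by
            gcongr
            refine sl_le_const_mul hr₀ fun k => ?_
            unfold Wk
            calc _ ≤ ENNReal.ofReal (V₀ (t / 2 ^ k)) * (Ck * (Kf A₀.N A₁.N (t / 2 ^ k) (g + h) +
                    ENNReal.ofReal (1 / 2 ^ k) * M)) := by
                  gcongr
                  refine (kg2 _ g h).trans ?_
                  rw [hsc t k h ht]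
                  gcongr
              _ = _ := by ring
        _ ≤ _ := by
            gcongr
            refine (hs _ _ _).trans ?_
            gcongr
            · exact (hi _ t ht).2
            · apply geo0
              intro j
              calc _ ≤ _ := mul_le_mul_left (hd0 t j ht) M
                _ = _ := by ring
    have e2 : Qf A₀.N A₁.N r₀ V₀ g t ≤ Cj * (T0 * (Cg0 * (ENNReal.ofReal (V₀ t) * M))) := by
      refine (hj g t ht).1.trans ?_
      gcongr
      apply hgt0
      intro j
      unfold Wk
      calc _ ≤ (Cg0 * ENNReal.ofReal (((2 : ℝ) ^ (-(-α₀ / 2))) ^ j) * ENNReal.ofReal (V₀ t)) * M := by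
            gcongr
            · exact hg0 t j ht
            · exact (Kf_le_left A₀ A₁ _ g).trans hM1
        _ = _ := by ring
    calc _ ≤ Ct0 * (If A₀.N A₁.N r₀ V₀ g t + Qf A₀.N A₁.N r₀ V₀ g t) := ht0 _ t _ ht subset_rfl
      _ ≤ Ct0 * (Ci * (Ck * (Cs * (Ci * (If A₀.N A₁.N r₀ V₀ (g + h) t + ENNReal.ofReal (V₀ t) * M)
            + S0 * (Cd0 * (If A₀.N A₁.N r₀ V₀ (g + h) t + ENNReal.ofReal (V₀ t) * M)))))
            + Cj * (T0 * (Cg0 * (If A₀.N A₁.N r₀ V₀ (g + h) t + ENNReal.ofReal (V₀ t) * M)))) := by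
          gcongr
          · refine e1.trans ?_
            gcongr
            · exact le_self_add
            · exact le_add_self
          · refine e2.trans ?_
            gcongr
            exact le_add_self
      _ = _ := by ring
  have u2 : ∃ C : ℝ≥0∞, C ≠ ∞ ∧ ∀ g h s M, 0 < s → A₀.N g ≤ M →
      Qf A₀.N A₁.N q₁ V₁ h s ≤ C * (Qf A₀.N A₁.N q₁ V₁ (g + h) s + ENNReal.ofReal (V₁ s) * M) := by
    refine ⟨Cj1 * (Ck * (Csq * (Cj1 + T1 * Cg1))), by finiteness, fun g h s M hs' hM => ?_⟩
    calc _ ≤ _ := (hj1 h s hs').1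
      _ ≤ Cj1 * (Ck * sl q₁ (fun k : ℕ => Wk A₀.N A₁.N V₁ (g + h) (2 ^ k * s) +
            ENNReal.ofReal (V₁ (2 ^ k * s)) * M)) := by
          gcongr
          refine sl_le_const_mul hq₁ fun k => ?_
          unfold Wk
          calc _ ≤ ENNReal.ofReal (V₁ (2 ^ k * s)) * (Ck * (Kf A₀.N A₁.N (2 ^ k * s) (g + h) + M)) := by
                gcongr
                refine (kh2 _ g h).trans ?_
                gcongr
            _ = _ := by ring
      _ ≤ Cj1 * (Ck * (Csq * (Cj1 * (Qf A₀.N A₁.N q₁ V₁ (g + h) s) +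
            T1 * (Cg1 * (ENNReal.ofReal (V₁ s) * M))))) := by
          gcongr
          refine (hsq _ _ _).trans ?_
          gcongr
          · exact (hj1 _ s hs').2
          · apply hgt1
            intro j
            calc _ ≤ _ := mul_le_mul_left (hg1 s j hs') M
              _ = _ := by ring
      _ ≤ Cj1 * (Ck * (Csq * (Cj1 * (Qf A₀.N A₁.N q₁ V₁ (g + h) s + ENNReal.ofReal (V₁ s) * M) +
            T1 * (Cg1 * (Qf A₀.N A₁.N q₁ V₁ (g + h) s + ENNReal.ofReal (V₁ s) * M))))) := by
          gcongr
          · exact le_self_add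
          · exact le_add_self
      _ = _ := by ring
  obtain ⟨C1, hC1, u1⟩ := u1
  obtain ⟨C2, hC2, u2⟩ := u2
  have u3 : ∃ C : ℝ≥0∞, C ≠ ∞ ∧ ∀ g h t s M, 0 < t → 0 < s → A₀.N g ≤ M → ENNReal.ofReal t * A₁.N h ≤ M →
      Qf A₀.N A₁.N q₁ V₁ h s ≤ C * (Qf A₀.N A₁.N q₁ V₁ (g + h) t + ENNReal.ofReal (V₁ t) * M) := by
    refine ⟨Ctq * (Ci1 * (S1 * Cd1) + C2), by finiteness, fun g h t s M ht hs' hM1 hM2 => ?_⟩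
    have e1 : If A₀.N A₁.N q₁ V₁ h t ≤ Ci1 * (S1 * (Cd1 * (ENNReal.ofReal (V₁ t) * M))) := by
      refine (hi1 h t ht).1.trans ?_
      gcongr
      apply geo1
      intro j
      unfold Wk
      calc _ ≤ ENNReal.ofReal (V₁ (t / 2 ^ j)) * (ENNReal.ofReal (1 / 2 ^ j) * M) := by
            gcongr
            refine (Kf_le_right A₀ A₁ _ h).trans ?_
            rw [hsc t j h ht]
            gcongr
        _ = ENNReal.ofReal (V₁ (t / 2 ^ j)) * ENNReal.ofReal (1 / 2 ^ j) * M := by ring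
        _ ≤ _ := mul_le_mul_left (hd1 t j ht) M
        _ = _ := by ring
    calc _ ≤ Ctq * (If A₀.N A₁.N q₁ V₁ h t + Qf A₀.N A₁.N q₁ V₁ h t) :=
          htq _ t _ ht (Ioi_subset_Ioi hs'.le)
      _ ≤ Ctq * (Ci1 * (S1 * (Cd1 * (Qf A₀.N A₁.N q₁ V₁ (g + h) t + ENNReal.ofReal (V₁ t) * M))) +
            C2 * (Qf A₀.N A₁.N q₁ V₁ (g + h) t + ENNReal.ofReal (V₁ t) * M)) := by
          gcongr
          · refine e1.trans ?_
            gcongr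
            exact le_add_self
          · exact u2 g h t M ht hM1
      _ = _ := by ring
  obtain ⟨C3, hC3, u3⟩ := u3
  have u4 : ∃ C : ℝ≥0∞, C ≠ ∞ ∧ ∀ g h t M, 0 < t → A₀.N g ≤ M → ENNReal.ofReal t * A₁.N h ≤ M →
      X1 A₀.N A₁.N r₁ q₁ β V₁ h ≤ C * ((sl r₁ (fun j : ℕ => ENNReal.ofReal (β (2 ^ j * t)) *
          Qf A₀.N A₁.N q₁ V₁ (g + h) (2 ^ j * t)) + ENNReal.ofReal (Λ t) * Qf A₀.N A₁.N q₁ V₁ (g + h) t)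
          + ENNReal.ofReal (Λ t) * ENNReal.ofReal (V₁ t) * M) := by
    refine ⟨Ct1 * (Cn * (Cl * C3) + Cp * (C2 * (Cs1 * (1 + T2 * (Cg2 * Cl))))), by finiteness,
      fun g h t M ht hM1 hM2 => ?_⟩
    set J := sl r₁ (fun j : ℕ => ENNReal.ofReal (β (2 ^ j * t)) *
          Qf A₀.N A₁.N q₁ V₁ (g + h) (2 ^ j * t)) with hJ
    have e1 : LqNorm r₁ (Ioo 0 t) (itg r₁ (fun t => ENNReal.ofReal (β t) * Qf A₀.N A₁.N q₁ V₁ h t)) ≤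
        Cn * (Cl * C3 * (ENNReal.ofReal (Λ t) * (Qf A₀.N A₁.N q₁ V₁ (g + h) t + ENNReal.ofReal (V₁ t) * M))) := by
      refine (hn _ (hdb.mul (hdq h)) t ht).1.trans ?_
      gcongr
      calc _ ≤ sl r₁ (fun j : ℕ => ENNReal.ofReal (β (t / 2 ^ j)) *
              (C3 * (Qf A₀.N A₁.N q₁ V₁ (g + h) t + ENNReal.ofReal (V₁ t) * M))) := by
            refine sl_mono _ fun j => ?_
            gcongr
            exact u3 g h t _ M ht (by positivity) hM1 hM2
        _ = _ := sl_mul_const hr₁ _ _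
        _ ≤ (Cl * ENNReal.ofReal (Λ t)) * (C3 * (Qf A₀.N A₁.N q₁ V₁ (g + h) t + ENNReal.ofReal (V₁ t) * M)) := by
            gcongr
            exact (hl t ht).2
        _ = _ := by ring
    have hβΛ : ENNReal.ofReal (β t) ≤ Cl * ENNReal.ofReal (Λ t) := by
      refine le_trans ?_ (hl t ht).2
      have := le_sl hr₁ (fun j : ℕ => ENNReal.ofReal (β (t / 2 ^ j))) 0
      simpa using this
    have e2 : LqNorm r₁ (Ioi t) (itg r₁ (fun t => ENNReal.ofReal (β t) * Qf A₀.N A₁.N q₁ V₁ h t)) ≤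
        Cp * (C2 * (Cs1 * (J + T2 * (Cg2 * Cl * (ENNReal.ofReal (Λ t) * ENNReal.ofReal (V₁ t) * M))))) := by
      refine (hp _ (hdb.mul (hdq h)) t ht).1.trans ?_
      gcongr
      calc _ ≤ C2 * sl r₁ (fun j : ℕ => ENNReal.ofReal (β (2 ^ j * t)) *
              Qf A₀.N A₁.N q₁ V₁ (g + h) (2 ^ j * t) +
              ENNReal.ofReal (β (2 ^ j * t)) * ENNReal.ofReal (V₁ (2 ^ j * t)) * M) := by
            refine sl_le_const_mul hr₁ fun j => ?_
            calc _ ≤ ENNReal.ofReal (β (2 ^ j * t)) * (C2 * (Qf A₀.N A₁.N q₁ V₁ (g + h) (2 ^ j * t)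
                    + ENNReal.ofReal (V₁ (2 ^ j * t)) * M)) := by
                  gcongr
                  exact u2 g h _ M (by positivity) hM1
              _ = _ := by ring
        _ ≤ _ := by
            gcongr
            refine (hs1 _ _ _).trans ?_
            gcongr
            apply hgt2
            intro j
            rw [← ENNReal.ofReal_mul (hβ.1 _ (by positivity)).le]
            calc _ ≤ _ := mul_le_mul_left (hg2 t j ht) M
              _ = Cg2 * ENNReal.ofReal (((2 : ℝ) ^ (-(-α₁ / 2))) ^ j) * (ENNReal.ofReal (β t) * ENNReal.ofReal (V₁ t)) * M := by
                  rw [← ENNReal.ofReal_mul (hβ.1 _ ht).le]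
              _ ≤ Cg2 * ENNReal.ofReal (((2 : ℝ) ^ (-(-α₁ / 2))) ^ j) * ((Cl * ENNReal.ofReal (Λ t)) * ENNReal.ofReal (V₁ t)) * M := by
                  gcongr
              _ = _ := by ring
    set Z := (J + ENNReal.ofReal (Λ t) * Qf A₀.N A₁.N q₁ V₁ (g + h) t)
          + ENNReal.ofReal (Λ t) * ENNReal.ofReal (V₁ t) * M with hZ
    calc _ ≤ Ct1 * (_ + _) := ht1 _ t _ ht subset_rfl
      _ ≤ Ct1 * (Cn * (Cl * C3 * Z) + Cp * (C2 * (Cs1 * (Z + T2 * (Cg2 * Cl * Z))))) := by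
          gcongr
          · refine e1.trans ?_
            gcongr
            rw [hZ, mul_add, ← mul_assoc]
            gcongr
            exact le_add_self
          · refine e2.trans ?_
            gcongr
            · rw [hZ, add_assoc]; exact le_self_add
            · rw [hZ]; exact le_add_self
      _ = _ := by ring
  obtain ⟨C4, hC4, u4⟩ := u4
  refine ⟨C1 + C4 + 1, by finiteness, fun f t ht => ?_⟩
  have hρt := hρ t ht
  set J := sl r₁ (fun j : ℕ => ENNReal.ofReal (β (2 ^ j * t)) *
          Qf A₀.N A₁.N q₁ V₁ f (2 ^ j * t)) with hJ
  set R := ENNReal.ofReal (ρ t) * (J + ENNReal.ofReal (Λ t) * Qf A₀.N A₁.N q₁ V₁ f t) with hR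
  have main : ∀ g : E, Kf (X0 A₀.N A₁.N r₀ V₀) (X1 A₀.N A₁.N r₁ q₁ β V₁) (ρ t) f ≤
      (C1 + C4) * (If A₀.N A₁.N r₀ V₀ f t + R +
        ENNReal.ofReal (V₀ t) * (A₀.N g + ENNReal.ofReal t * A₁.N (f - g))) := by
    intro g
    set M := A₀.N g + ENNReal.ofReal t * A₁.N (f - g)
    have h1 := u1 g (f - g) t M ht le_self_add le_add_self
    have h2 := u4 g (f - g) t M ht le_self_add le_add_self
    rw [add_sub_cancel] at h1 h2
    have hV : ENNReal.ofReal (V₀ t) = ENNReal.ofReal (ρ t) * (ENNReal.ofReal (Λ t) * ENNReal.ofReal (V₁ t)) := by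
      rw [hid t ht, ENNReal.ofReal_mul hρt.le, ENNReal.ofReal_mul (hΛ.1 t ht).le]
    set Y := If A₀.N A₁.N r₀ V₀ f t + R + ENNReal.ofReal (V₀ t) * M with hY
    calc _ ≤ X0 A₀.N A₁.N r₀ V₀ g + ENNReal.ofReal (ρ t) * X1 A₀.N A₁.N r₁ q₁ β V₁ (f - g) := iInf_le _ g
      _ ≤ C1 * Y + C4 * Y := by
          refine add_le_add ?_ ?_
          · refine h1.trans ?_
            gcongr
            rw [hY]
            gcongr
            exact le_self_add
          · calc _ ≤ ENNReal.ofReal (ρ t) * _ := mul_le_mul_right h2 _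
              _ = C4 * (R + ENNReal.ofReal (V₀ t) * M) := by rw [hV, hR]; ring
              _ ≤ _ := by
                refine mul_le_mul_right ?_ _
                rw [hY]
                exact add_le_add le_add_self le_rfl
      _ = _ := by ring
  have hV0 : ENNReal.ofReal (V₀ t) ≠ 0 := by
    simpa using hV₀.1 t ht
  have hinf : Wk A₀.N A₁.N V₀ f t = ⨅ g : E, ENNReal.ofReal (V₀ t) * (A₀.N g + ENNReal.ofReal t * A₁.N (f - g)) := by
    unfold Wk Kf
    rw [ENNReal.mul_iInf_of_ne hV0 ENNReal.ofReal_ne_top]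
  have : Kf (X0 A₀.N A₁.N r₀ V₀) (X1 A₀.N A₁.N r₁ q₁ β V₁) (ρ t) f ≤
      (C1 + C4 + 1) * (⨅ g : E, (If A₀.N A₁.N r₀ V₀ f t + R +
        ENNReal.ofReal (V₀ t) * (A₀.N g + ENNReal.ofReal t * A₁.N (f - g)))) :=
    le_const_mul_iInf (by finiteness) main
  rw [← ENNReal.add_iInf, ← hinf] at this
  calc _ ≤ _ := this
    _ = (C1 + C4 + 1) * (If A₀.N A₁.N r₀ V₀ f t + Wk A₀.N A₁.N V₀ f t + R) := by ring


def HU (δ : ℝ) (y : ℝ → ℝ≥0∞) (t : ℝ) : ℝ≥0∞ :=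
  ⨆ j : ℕ, ENNReal.ofReal (((2 : ℝ) ^ (-δ)) ^ j) * y (2 ^ j * t)

def HD (δ : ℝ) (y : ℝ → ℝ≥0∞) (t : ℝ) : ℝ≥0∞ :=
  ⨆ j : ℕ, ENNReal.ofReal (((2 : ℝ) ^ (-δ)) ^ j) * y (t / 2 ^ j)

lemma geo_dbl (δ : ℝ) (j : ℕ) : ENNReal.ofReal (((2 : ℝ) ^ (-(2 * δ))) ^ j) =
    ENNReal.ofReal (((2 : ℝ) ^ (-δ)) ^ j) * ENNReal.ofReal (((2 : ℝ) ^ (-δ)) ^ j) := by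
  rw [← ENNReal.ofReal_mul (by positivity), ← mul_pow, ← Real.rpow_add (by norm_num)]
  congr 3; ring

lemma HU_shift (δ : ℝ) (y : ℝ → ℝ≥0∞) (t : ℝ) (i : ℕ) :
    ENNReal.ofReal (((2 : ℝ) ^ (-(2 * δ))) ^ i) * HU δ y (2 ^ i * t) ≤
      ENNReal.ofReal (((2 : ℝ) ^ (-δ)) ^ i) * HU δ y t := by
  rw [geo_dbl, mul_assoc]
  refine mul_le_mul_right ?_ _
  unfold HU
  rw [ENNReal.mul_iSup]
  refine iSup_le fun j => ?_
  refine le_trans (le_of_eq ?_) (le_iSup _ (i + j))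
  rw [← mul_assoc, ← ENNReal.ofReal_mul (by positivity), ← pow_add, ← mul_assoc, ← pow_add, add_comm j i]

lemma HU_hardy {q : ℝ≥0∞} (hq : 0 < q) {δ : ℝ} (hδ : 0 < δ) : ∃ C : ℝ≥0∞, C ≠ ∞ ∧ ∀ y : ℝ → ℝ≥0∞,
    sl q (fun k : ℤ => HU δ y ((2 : ℝ) ^ k)) ≤ C * sl q (fun k : ℤ => y ((2 : ℝ) ^ k)) := by
  have h1 : (2 : ℝ) ^ (-δ) < 1 := Real.rpow_lt_one_of_one_lt_of_neg (by norm_num) (by linarith)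
  obtain ⟨C, hC, h⟩ := sl_hardy hq (r := (2 : ℝ) ^ (-δ)) (by positivity) h1 1
  refine ⟨C, hC, fun y => le_trans (le_of_eq ?_) (h (fun k => y ((2 : ℝ) ^ k)))⟩
  congr 1; ext k; unfold HU; congr 1; ext j; congr 2
  rw [zpow_add₀ (by norm_num), one_mul, zpow_natCast, mul_comm]

lemma HD_hardy {q : ℝ≥0∞} (hq : 0 < q) {δ : ℝ} (hδ : 0 < δ) : ∃ C : ℝ≥0∞, C ≠ ∞ ∧ ∀ y : ℝ → ℝ≥0∞,
    sl q (fun k : ℤ => HD δ y ((2 : ℝ) ^ k)) ≤ C * sl q (fun k : ℤ => y ((2 : ℝ) ^ k)) := by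
  have h1 : (2 : ℝ) ^ (-δ) < 1 := Real.rpow_lt_one_of_one_lt_of_neg (by norm_num) (by linarith)
  obtain ⟨C, hC, h⟩ := sl_hardy hq (r := (2 : ℝ) ^ (-δ)) (by positivity) h1 (-1)
  refine ⟨C, hC, fun y => le_trans (le_of_eq ?_) (h (fun k => y ((2 : ℝ) ^ k)))⟩
  congr 1; ext k; unfold HD; congr 1; ext j; congr 2
  rw [neg_one_mul, ← sub_eq_add_neg, zpow_sub₀ (by norm_num), zpow_natCast]

lemma claimA (N₀ N₁ : E → ℝ≥0∞) {q : ℝ≥0∞} (hq : 0 < q) {V₁ Λ F : ℝ → ℝ} {α₁ δ γ : ℝ}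
    (hδ : 0 < δ) (hγ : 2 * δ < γ)
    (hV₁ : PW α₁ V₁) (hΛ : PW 0 Λ) (hF : PW γ F) :
    ∃ C : ℝ≥0∞, C ≠ ∞ ∧ ∀ f t, 0 < t →
      ENNReal.ofReal (F t) * (ENNReal.ofReal (Λ t) * Qf N₀ N₁ q V₁ f t) ≤
      C * HU δ (Wk N₀ N₁ (fun t => F t * (Λ t * V₁ t)) f) t := by
  obtain ⟨Cd, hCd, hd⟩ := (hF.mul hΛ).decay (δ := 2 * δ) (by simpa using hγ)
  obtain ⟨Cq, hCq, hq'⟩ := Qf_disc hq hV₁ N₀ N₁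
  obtain ⟨S, hS, hg⟩ := sl_geom_le hq hδ
  refine ⟨Cq * S * Cd, by finiteness, fun f t ht => ?_⟩
  set y := Wk N₀ N₁ (fun t => F t * (Λ t * V₁ t)) f with hy
  rw [← mul_assoc, ← ENNReal.ofReal_mul (hF.1 t ht).le]
  calc _ ≤ ENNReal.ofReal (F t * Λ t) * (Cq * sl q (fun k : ℕ => Wk N₀ N₁ V₁ f ((2 : ℝ) ^ k * t))) :=
        mul_le_mul_right (hq' f t ht).1 _
    _ = Cq * sl q (fun k : ℕ => ENNReal.ofReal (F t * Λ t) * Wk N₀ N₁ V₁ f ((2 : ℝ) ^ k * t)) := by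
        rw [sl_const_mul hq]; ring
    _ ≤ Cq * (S * (Cd * HU δ y t)) := by
        refine mul_le_mul_right (hg _ _ fun j => ?_) _
        have hp : (0 : ℝ) < 2 ^ j * t := by positivity
        calc _ ≤ _ := mul_le_mul_left (hd t j ht) _
          _ = Cd * ENNReal.ofReal (((2 : ℝ) ^ (-δ)) ^ j) *
              (ENNReal.ofReal (((2 : ℝ) ^ (-δ)) ^ j) * y (2 ^ j * t)) := by
              rw [geo_dbl, hy]; unfold Wk
              beta_reduce
              rw [← mul_assoc (F _), ENNReal.ofReal_mul (mul_pos (hF.1 _ hp) (hΛ.1 _ hp)).le]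
              ring
          _ ≤ Cd * ENNReal.ofReal (((2 : ℝ) ^ (-δ)) ^ j) * HU δ y t :=
              mul_le_mul_right (le_iSup (fun j : ℕ => ENNReal.ofReal (((2 : ℝ) ^ (-δ)) ^ j) * y (2 ^ j * t)) j) _
          _ = _ := by ring
    _ = _ := by ring

lemma claimB (N₀ N₁ : E → ℝ≥0∞) {q r₁ : ℝ≥0∞} (hq : 0 < q) (hr₁ : 0 < r₁) {V₁ Λ F β : ℝ → ℝ} {α₁ δ γ : ℝ}
    (hδ : 0 < δ) (hγ : 2 * δ < γ)
    (hV₁ : PW α₁ V₁) (hΛ : PW 0 Λ) (hF : PW γ F)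
    {Cl : ℝ≥0∞} (hCl : Cl ≠ ∞) (hl : ∀ t, 0 < t → ENNReal.ofReal (β t) ≤ Cl * ENNReal.ofReal (Λ t)) :
    ∃ C : ℝ≥0∞, C ≠ ∞ ∧ ∀ f t, 0 < t →
      ENNReal.ofReal (F t) * sl r₁ (fun j : ℕ => ENNReal.ofReal (β (2 ^ j * t)) * Qf N₀ N₁ q V₁ f (2 ^ j * t)) ≤
      C * HU δ (Wk N₀ N₁ (fun t => F t * (Λ t * V₁ t)) f) t := by
  obtain ⟨Cd, hCd, hd⟩ := hF.decay (δ := 2 * δ) hγ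
  obtain ⟨Ca, hCa, ha⟩ := claimA N₀ N₁ hq hδ hγ hV₁ hΛ hF
  obtain ⟨S, hS, hg⟩ := sl_geom_le hr₁ hδ
  refine ⟨S * (Cd * Cl * Ca), by finiteness, fun f t ht => ?_⟩
  set y := Wk N₀ N₁ (fun t => F t * (Λ t * V₁ t)) f with hy
  rw [← sl_const_mul hr₁, mul_assoc]
  refine hg _ _ fun j => ?_
  have hp : (0 : ℝ) < 2 ^ j * t := by positivity
  set s := 2 ^ j * t with hs
  calc _ ≤ (Cd * ENNReal.ofReal (((2 : ℝ) ^ (-(2 * δ))) ^ j) * ENNReal.ofReal (F s)) *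
        ((Cl * ENNReal.ofReal (Λ s)) * Qf N₀ N₁ q V₁ f s) :=
        mul_le_mul' (hd t j ht) (mul_le_mul_left (hl s hp) _)
    _ = Cd * Cl * ENNReal.ofReal (((2 : ℝ) ^ (-(2 * δ))) ^ j) *
        (ENNReal.ofReal (F s) * (ENNReal.ofReal (Λ s) * Qf N₀ N₁ q V₁ f s)) := by ring
    _ ≤ Cd * Cl * ENNReal.ofReal (((2 : ℝ) ^ (-(2 * δ))) ^ j) * (Ca * HU δ y s) :=
        mul_le_mul_right (ha f s hp) _
    _ = Cd * Cl * Ca * (ENNReal.ofReal (((2 : ℝ) ^ (-(2 * δ))) ^ j) * HU δ y s) := by ring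
    _ ≤ Cd * Cl * Ca * (ENNReal.ofReal (((2 : ℝ) ^ (-δ)) ^ j) * HU δ y t) :=
        mul_le_mul_right (HU_shift δ y t j) _
    _ = _ := by ring

lemma claimC (N₀ N₁ : E → ℝ≥0∞) {q : ℝ≥0∞} (hq : 0 < q) {V w : ℝ → ℝ} {α δ κ : ℝ}
    (hδ : 0 < δ) (hκ : κ < -(2 * δ)) (hV : PW α V) (hw : PW κ w) :
    ∃ C : ℝ≥0∞, C ≠ ∞ ∧ ∀ f t, 0 < t →
      ENNReal.ofReal (w t) * If N₀ N₁ q V f t ≤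
      C * HD δ (Wk N₀ N₁ (fun t => w t * V t) f) t := by
  obtain ⟨Cd, hCd, hd⟩ := hw.growth' hκ
  obtain ⟨Cq, hCq, hq'⟩ := If_disc hq hV N₀ N₁
  obtain ⟨S, hS, hg⟩ := sl_geom_le hq hδ
  refine ⟨Cq * S * Cd, by finiteness, fun f t ht => ?_⟩
  set y := Wk N₀ N₁ (fun t => w t * V t) f with hy
  calc _ ≤ ENNReal.ofReal (w t) * (Cq * sl q (fun k : ℕ => Wk N₀ N₁ V f (t / (2 : ℝ) ^ k))) :=
        mul_le_mul_right (hq' f t ht).1 _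
    _ = Cq * sl q (fun k : ℕ => ENNReal.ofReal (w t) * Wk N₀ N₁ V f (t / (2 : ℝ) ^ k)) := by
        rw [sl_const_mul hq]; ring
    _ ≤ Cq * (S * (Cd * HD δ y t)) := by
        refine mul_le_mul_right (hg _ _ fun j => ?_) _
        have hp : (0 : ℝ) < t / 2 ^ j := by positivity
        calc _ ≤ _ := mul_le_mul_left (hd t j ht) _
          _ = Cd * ENNReal.ofReal (((2 : ℝ) ^ (-δ)) ^ j) *
              (ENNReal.ofReal (((2 : ℝ) ^ (-δ)) ^ j) * y (t / 2 ^ j)) := by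
              rw [geo_dbl, hy]; unfold Wk
              rw [ENNReal.ofReal_mul (hw.1 _ hp).le]
              ring
          _ ≤ Cd * ENNReal.ofReal (((2 : ℝ) ^ (-δ)) ^ j) * HD δ y t :=
              mul_le_mul_right (le_iSup (fun j : ℕ => ENNReal.ofReal (((2 : ℝ) ^ (-δ)) ^ j) * y (t / 2 ^ j)) j) _
          _ = _ := by ring
    _ = _ := by ring


def LeN (n m : E → ℝ≥0∞) : Prop := ∃ C : ℝ≥0∞, C ≠ ∞ ∧ ∀ f, n f ≤ C * m f

lemma LeN.trans {n m l : E → ℝ≥0∞} (h : LeN n m) (h' : LeN m l) : LeN n l := by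
  obtain ⟨C, hC, h⟩ := h
  obtain ⟨C', hC', h'⟩ := h'
  refine ⟨C * C', by finiteness, fun f => (h f).trans ?_⟩
  rw [mul_assoc]
  exact mul_le_mul_right (h' f) _

def EqN (n m : E → ℝ≥0∞) : Prop := LeN n m ∧ LeN m n

lemma EqN.trans {n m l : E → ℝ≥0∞} (h : EqN n m) (h' : EqN m l) : EqN n l :=
  ⟨h.1.trans h'.1, h'.2.trans h.2⟩

lemma EqN.symm {n m : E → ℝ≥0∞} (h : EqN n m) : EqN m n := ⟨h.2, h.1⟩

lemma EqN.equivNorms {n m : E → ℝ≥0∞} (h : EqN n m) : EquivNorms n m := by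
  obtain ⟨⟨C, hC, h⟩, ⟨C', hC', h'⟩⟩ := h
  have hp : 0 < C + C' + 1 := by positivity
  refine ⟨C + C' + 1, hp, by finiteness, fun f => ⟨?_, ?_⟩⟩
  · rw [ENNReal.inv_mul_le_iff hp.ne' (by finiteness)]
    refine (h' f).trans (mul_le_mul_left ?_ _)
    exact le_add_self.trans le_self_add
  · refine (h f).trans (mul_le_mul_left ?_ _)
    exact le_self_add.trans le_self_add

/-- Discretisation of a family of doubling functions. -/
lemma EqN.disc {r : ℝ≥0∞} (hr : 0 < r) {D : ℝ≥0∞} (hD : D ≠ ∞) (Φ : E → ℝ → ℝ≥0∞)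
    (h : ∀ f, Dbl D (Φ f)) :
    EqN (fun f => LqNorm r (Ioi 0) (itg r (Φ f))) (fun f => sl r (fun k : ℤ => Φ f ((2 : ℝ) ^ k))) := by
  obtain ⟨C, hC, h'⟩ := discZ hr hD
  exact ⟨⟨C, hC, fun f => (h' _ (h f)).1⟩, ⟨C, hC, fun f => (h' _ (h f)).2⟩⟩

lemma EqN.chg {r : ℝ≥0∞} (hr : 0 < r) {D : ℝ≥0∞} (hD : D ≠ ∞) (Φ : E → ℝ → ℝ≥0∞)
    (h : ∀ f, Dbl D (Φ f)) {γ : ℝ} (hγ : 0 < γ) {ρ : ℝ → ℝ} (hρ : PW γ ρ) :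
    EqN (fun f => sl r (fun k : ℤ => Φ f ((2 : ℝ) ^ k)))
      (fun f => sl r (fun k : ℤ => Φ f (ρ ((2 : ℝ) ^ k)))) := by
  obtain ⟨C, hC, h'⟩ := _root_.chg hr hγ hρ hD
  exact ⟨⟨C, hC, fun f => (h' _ (h f)).1⟩, ⟨C, hC, fun f => (h' _ (h f)).2⟩⟩

lemma LeN.sl {r : ℝ≥0∞} (hr : 0 < r) {x y : E → ℝ → ℝ≥0∞}
    (h : ∃ C : ℝ≥0∞, C ≠ ∞ ∧ ∀ f t, 0 < t → x f t ≤ C * y f t) :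
    LeN (fun f => sl r (fun k : ℤ => x f ((2 : ℝ) ^ k))) (fun f => sl r (fun k : ℤ => y f ((2 : ℝ) ^ k))) := by
  obtain ⟨C, hC, h⟩ := h
  exact ⟨C, hC, fun f => sl_le_const_mul hr fun k => h f _ (by positivity)⟩

lemma eq_If_W (N₀ N₁ : E → ℝ≥0∞) {r₀ r : ℝ≥0∞} (hr₀ : 0 < r₀) (hr : 0 < r) {V w : ℝ → ℝ} {α κ : ℝ}
    (hV : PW α V) (hw : PW κ w) (hκ : κ < 0) :
    EqN (fun f => sl r (fun k : ℤ => ENNReal.ofReal (w ((2 : ℝ) ^ k)) * If N₀ N₁ r₀ V f ((2 : ℝ) ^ k)))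
      (fun f => sl r (fun k : ℤ => Wk N₀ N₁ (fun t => w t * V t) f ((2 : ℝ) ^ k))) := by
  constructor
  · have h1 := LeN.sl hr (claimC (q := r₀) N₀ N₁ hr₀ (δ := -κ / 4) (by linarith) (by linarith) hV hw)
    obtain ⟨C, hC, h⟩ := HD_hardy hr (δ := -κ / 4) (by linarith)
    exact h1.trans ⟨C, hC, fun f => h _⟩
  · refine LeN.sl (x := fun f => Wk N₀ N₁ (fun t => w t * V t) f)
      (y := fun f t => ENNReal.ofReal (w t) * If N₀ N₁ r₀ V f t) hr ?_
    obtain ⟨C, hC, h⟩ := Wk_le_If hr₀ hV N₀ N₁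
    refine ⟨C, hC, fun f t ht => ?_⟩
    calc _ = ENNReal.ofReal (w t) * Wk N₀ N₁ V f t := by
          unfold Wk; beta_reduce; rw [ENNReal.ofReal_mul (hw.1 t ht).le, mul_assoc]
      _ ≤ ENNReal.ofReal (w t) * (C * If N₀ N₁ r₀ V f t) := mul_le_mul_right (h f t ht) _
      _ = _ := by ring

lemma eq_K_If (A₀ A₁ : QuasiBanach E) {q₁ r₀ r₁ r : ℝ≥0∞} (hq₁ : 0 < q₁) (hr₀ : 0 < r₀) (hr₁ : 0 < r₁)
    (hr : 0 < r)
    {V₀ V₁ β Λ ρ w : ℝ → ℝ} {α₀ α₁ γ κ : ℝ} (hα₀ : α₀ < 0) (hα₀' : -1 < α₀) (hα₁ : α₁ < 0) (hα₁' : -1 < α₁)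
    (hV₀ : PW α₀ V₀) (hV₁ : PW α₁ V₁) (hβ : PW 0 β)
    (hΛ : PW 0 Λ) (hρ : PW γ ρ) (hγ : 0 < γ) (hw : PW κ w) (hκ : 0 < κ + γ)
    (hΛs : ∃ C : ℝ≥0∞, C ≠ ∞ ∧ ∀ t : ℝ, 0 < t →
      ENNReal.ofReal (Λ t) ≤ C * sl r₁ (fun j : ℕ => ENNReal.ofReal (β (t / 2 ^ j))) ∧
      sl r₁ (fun j : ℕ => ENNReal.ofReal (β (t / 2 ^ j))) ≤ C * ENNReal.ofReal (Λ t))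
    (hid : ∀ t, 0 < t → V₀ t = ρ t * (Λ t * V₁ t)) :
    EqN (fun f => sl r (fun k : ℤ => ENNReal.ofReal (w ((2 : ℝ) ^ k)) *
        Kf (X0 A₀.N A₁.N r₀ V₀) (X1 A₀.N A₁.N r₁ q₁ β V₁) (ρ ((2 : ℝ) ^ k)) f))
      (fun f => sl r (fun k : ℤ => ENNReal.ofReal (w ((2 : ℝ) ^ k)) *
        If A₀.N A₁.N r₀ V₀ f ((2 : ℝ) ^ k))) := by
  have hF := hw.mul hρ
  set δ := (κ + γ) / 4 with hδ'
  have hδ : 0 < δ := by positivity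
  have hδ2 : 2 * δ < κ + γ := by rw [hδ']; linarith
  set y : E → ℝ → ℝ≥0∞ := fun f => Wk A₀.N A₁.N (fun t => w t * ρ t * (Λ t * V₁ t)) f with hy
  have hyt : ∀ f t, 0 < t → y f t = ENNReal.ofReal (w t) * Wk A₀.N A₁.N V₀ f t := by
    intro f t ht
    rw [hy]; unfold Wk; beta_reduce
    rw [hid t ht, mul_assoc (w t), ENNReal.ofReal_mul (hw.1 t ht).le, mul_assoc]
  constructor
  · obtain ⟨Cu, hCu, hu⟩ := upper A₀ A₁ hq₁ hr₀ hr₁ hα₀ hα₀' hα₁ hα₁' hV₀ hV₁ hβ hΛ hρ.1 hΛs hid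
    obtain ⟨Ca, hCa, ha⟩ := claimA A₀.N A₁.N hq₁ hδ hδ2 hV₁ hΛ hF
    obtain ⟨Cl, hCl, hl⟩ := hΛs
    have hβΛ : ∀ t, 0 < t → ENNReal.ofReal (β t) ≤ Cl * ENNReal.ofReal (Λ t) := by
      intro t ht
      refine le_trans ?_ (hl t ht).2
      have := le_sl hr₁ (fun j : ℕ => ENNReal.ofReal (β (t / 2 ^ j))) 0
      simpa using this
    obtain ⟨Cb, hCb, hb⟩ := claimB A₀.N A₁.N hq₁ hr₁ hδ hδ2 hV₁ hΛ hF hCl hβΛ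
    obtain ⟨Cw, hCw, hwi⟩ := Wk_le_If hr₀ hV₀ A₀.N A₁.N
    obtain ⟨Ch, hCh, hh⟩ := HU_hardy hr hδ
    obtain ⟨Cs, hCs, hs⟩ := sl_add hr
    have step : ∀ f t, 0 < t → ENNReal.ofReal (w t) *
        Kf (X0 A₀.N A₁.N r₀ V₀) (X1 A₀.N A₁.N r₁ q₁ β V₁) (ρ t) f ≤
        Cu * (1 + Cw) * (ENNReal.ofReal (w t) * If A₀.N A₁.N r₀ V₀ f t) +
          Cu * (Ca + Cb) * HU δ (y f) t := by
      intro f t ht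
      have e := ENNReal.ofReal_mul (p := w t) (q := ρ t) (hw.1 t ht).le
      have h1 := ha f t ht
      have h2 := hb f t ht
      rw [e] at h1 h2
      calc _ ≤ _ := mul_le_mul_right (hu f t ht) _
        _ = Cu * (ENNReal.ofReal (w t) * If A₀.N A₁.N r₀ V₀ f t +
              ENNReal.ofReal (w t) * Wk A₀.N A₁.N V₀ f t +
              (ENNReal.ofReal (w t) * ENNReal.ofReal (ρ t) *
                sl r₁ (fun j : ℕ => ENNReal.ofReal (β (2 ^ j * t)) * Qf A₀.N A₁.N q₁ V₁ f (2 ^ j * t)) +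
               ENNReal.ofReal (w t) * ENNReal.ofReal (ρ t) *
                (ENNReal.ofReal (Λ t) * Qf A₀.N A₁.N q₁ V₁ f t))) := by ring
        _ ≤ Cu * (ENNReal.ofReal (w t) * If A₀.N A₁.N r₀ V₀ f t +
              ENNReal.ofReal (w t) * (Cw * If A₀.N A₁.N r₀ V₀ f t) +
              (Cb * HU δ (y f) t + Ca * HU δ (y f) t)) := by
            refine mul_le_mul_right (add_le_add (add_le_add le_rfl (mul_le_mul_right (hwi f t ht) _))
              (add_le_add h2 h1)) _
        _ = _ := by ring
    refine ⟨Cs * (Cu * (1 + Cw) + Cu * (Ca + Cb) * (Ch * Cw)), by finiteness, fun f => ?_⟩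
    set I := sl r (fun k : ℤ => ENNReal.ofReal (w ((2 : ℝ) ^ k)) *
        If A₀.N A₁.N r₀ V₀ f ((2 : ℝ) ^ k)) with hI
    have hyI : sl r (fun k : ℤ => y f ((2 : ℝ) ^ k)) ≤ Cw * I := by
      refine sl_le_const_mul hr fun k => ?_
      have hp : (0 : ℝ) < 2 ^ k := by positivity
      rw [hyt f _ hp]
      calc _ ≤ _ := mul_le_mul_right (hwi f _ hp) _
        _ = _ := by ring
    calc _ ≤ _ := sl_mono r fun k => step f ((2 : ℝ) ^ k) (by positivity)
      _ ≤ _ := hs ℤ _ _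
      _ = Cs * (Cu * (1 + Cw) * I + Cu * (Ca + Cb) * sl r (fun k : ℤ => HU δ (y f) ((2 : ℝ) ^ k))) := by
          rw [sl_const_mul hr, sl_const_mul hr]
      _ ≤ Cs * (Cu * (1 + Cw) * I + Cu * (Ca + Cb) * (Ch * (Cw * I))) := by
          refine mul_le_mul_right (add_le_add le_rfl (mul_le_mul_right ((hh _).trans ?_) _)) _
          exact mul_le_mul_right hyI _
      _ = _ := by ring
  · obtain ⟨C, hC, h⟩ := lower A₀ A₁ hq₁ hr₀ hr₁ hV₀ hV₁ hβ hΛ hρ hγ hΛs hid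
    refine LeN.sl (x := fun f t => ENNReal.ofReal (w t) * If A₀.N A₁.N r₀ V₀ f t)
      (y := fun f t => ENNReal.ofReal (w t) *
        Kf (X0 A₀.N A₁.N r₀ V₀) (X1 A₀.N A₁.N r₁ q₁ β V₁) (ρ t) f) hr ⟨C, hC, fun f t ht => ?_⟩
    calc _ ≤ _ := mul_le_mul_right (h f t ht) _
      _ = _ := by ring

lemma normK_eq_X0 (N₀ N₁ : E → ℝ≥0∞) (θ : ℝ) (q : ℝ≥0∞) (b : ℝ → ℝ) :
    normK N₀ N₁ θ q b = X0 N₀ N₁ q (fun t => t ^ (-θ) * b t) := by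
  funext f
  refine LqNorm_congr q measurableSet_Ioi fun u hu => ?_
  have hu : (0 : ℝ) < u := hu
  unfold itg Wk
  beta_reduce
  rw [← mul_assoc, ← ENNReal.ofReal_mul (by positivity), sub_eq_add_neg, Real.rpow_add hu]
  congr 2; ring

lemma inner_eq (N₀ N₁ : E → ℝ≥0∞) (σ : ℝ) (q : ℝ≥0∞) (a : ℝ → ℝ) (f : E) {s : Set ℝ}
    (hs : MeasurableSet s) (h0 : s ⊆ Ioi 0) :
    LqNorm q s (fun u => ENNReal.ofReal (u ^ (-σ - q⁻¹.toReal) * a u) * Kf N₀ N₁ u f) =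
    LqNorm q s (itg q (Wk N₀ N₁ (fun t => t ^ (-σ) * a t) f)) := by
  refine LqNorm_congr q hs fun u hu => ?_
  have hu : (0 : ℝ) < u := h0 hu
  unfold itg Wk
  beta_reduce
  rw [← mul_assoc, ← ENNReal.ofReal_mul (by positivity), sub_eq_add_neg, Real.rpow_add hu]
  congr 2; ring

lemma normR_eq_X1 (N₀ N₁ : E → ℝ≥0∞) (σ : ℝ) (r q : ℝ≥0∞) (b a : ℝ → ℝ) :
    normR N₀ N₁ σ r q b a = X1 N₀ N₁ r q (fun s => b s / a s) (fun t => t ^ (-σ) * a t) := by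
  funext f
  refine LqNorm_congr r measurableSet_Ioi fun u hu => ?_
  have hu : (0 : ℝ) < u := hu
  rw [inner_eq N₀ N₁ σ q a f measurableSet_Ioi (Ioi_subset_Ioi hu.le)]
  unfold itg Qf itg
  beta_reduce
  rw [← mul_assoc, ← ENNReal.ofReal_mul (by positivity)]

lemma normL_eq (N₀ N₁ : E → ℝ≥0∞) (σ : ℝ) (r q : ℝ≥0∞) (b a : ℝ → ℝ) (f : E) :
    normL N₀ N₁ σ r q b a f = LqNorm r (Ioi 0) (itg r (fun t => ENNReal.ofReal (b t / a t) *
      If N₀ N₁ q (fun t => t ^ (-σ) * a t) f t)) := by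
  refine LqNorm_congr r measurableSet_Ioi fun u hu => ?_
  have hu : (0 : ℝ) < u := hu
  rw [inner_eq N₀ N₁ σ q a f measurableSet_Ioo Ioo_subset_Ioi_self]
  unfold itg If itg
  beta_reduce
  rw [← mul_assoc, ← ENNReal.ofReal_mul (by positivity)]

theorem theorem19
    (A₀ A₁ : QuasiBanach E)
    (hne : ∃ x : E, x ≠ 0 ∧ A₀.N x ≠ ∞ ∧ A₁.N x ≠ ∞)
    (θ₀ θ₁ : ℝ) (hθ₀ : 0 < θ₀) (hθ₀₁ : θ₀ < θ₁) (hθ₁ : θ₁ < 1)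
    (q₁ r₀ r₁ r : ℝ≥0∞) (hq₁ : 0 < q₁) (hr₀ : 0 < r₀) (hr₁ : 0 < r₁) (hr : 0 < r)
    (a a₁ b₀ b₁ : ℝ → ℝ)
    (h_sv_a : SlowlyVarying a)
    (h_sv_a₁ : SlowlyVarying a₁)
    (h_sv_b₀ : SlowlyVarying b₀)
    (h_sv_b₁ : SlowlyVarying b₁)
    (hfin : LqNorm r₁ (Ioo 0 1) (svWgt r₁ (fun s => b₁ s / a₁ s)) ≠ ∞)
    (c₁ ρ : ℝ → ℝ)
    (hc₁ : ∀ t, c₁ t = a₁ t * (LqNorm r₁ (Ioo 0 t) (svWgt r₁ (fun s => b₁ s / a₁ s))).toReal)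
    (hρ : ∀ t, ρ t = t ^ (θ₁ - θ₀) * (b₀ t / c₁ t)) :
    (∀ θ : ℝ, 0 < θ → θ < 1 →
      EquivNorms
        (normK (normK A₀.N A₁.N θ₀ r₀ b₀) (normR A₀.N A₁.N θ₁ r₁ q₁ b₁ a₁) θ r a)
        (normK A₀.N A₁.N ((1 - θ) * θ₀ + θ * θ₁) r
          (fun t => b₀ t ^ (1 - θ) * c₁ t ^ θ * a (ρ t)))) ∧
    (LqNorm r (Ioi 1) (svWgt r (fun s => a s)) ≠ ∞ →
      EquivNorms
        (normK (normK A₀.N A₁.N θ₀ r₀ b₀) (normR A₀.N A₁.N θ₁ r₁ q₁ b₁ a₁) 0 r a)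
        (normL A₀.N A₁.N θ₀ r r₀ (fun t => b₀ t * a (ρ t)) b₀)) := by
  have pa := PW.of_sv h_sv_a
  have pa₁ := PW.of_sv h_sv_a₁
  have pb₀ := PW.of_sv h_sv_b₀
  have pb₁ := PW.of_sv h_sv_b₁
  have hβ : PW 0 (fun s => b₁ s / a₁ s) := by
    simpa [div_eq_mul_inv] using pb₁.mul pa₁.inv
  obtain ⟨hΛ, hΛs⟩ := Lam hr₁ hβ hfin
  set β : ℝ → ℝ := fun s => b₁ s / a₁ s with hβdef
  set Λ : ℝ → ℝ := fun t => (LqNorm r₁ (Ioo 0 t) (svWgt r₁ β)).toReal with hΛdef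
  have hc₁' : c₁ = fun t => a₁ t * Λ t := funext hc₁
  have pc : PW 0 c₁ := by
    rw [hc₁']; simpa using pa₁.mul hΛ
  have hρ' : ρ = fun t => t ^ (θ₁ - θ₀) * (b₀ t * (c₁ t)⁻¹) := by
    funext t; rw [hρ t, div_eq_mul_inv]
  have pρ : PW (θ₁ - θ₀) ρ := by
    rw [hρ']; simpa using (PW.pow (θ₁ - θ₀)).mul (pb₀.mul pc.inv)
  have hγ : 0 < θ₁ - θ₀ := by linarith
  have pV₀ : PW (-θ₀) (fun t => t ^ (-θ₀) * b₀ t) := by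
    simpa using (PW.pow (-θ₀)).mul pb₀
  have pV₁ : PW (-θ₁) (fun t => t ^ (-θ₁) * a₁ t) := by
    simpa using (PW.pow (-θ₁)).mul pa₁
  have hid : ∀ t : ℝ, 0 < t → t ^ (-θ₀) * b₀ t = ρ t * (Λ t * (t ^ (-θ₁) * a₁ t)) := by
    intro t ht
    have h1 := pa₁.1 t ht
    have h2 := hΛ.1 t ht
    have h3 : c₁ t = a₁ t * Λ t := hc₁ t
    have h4 : t ^ (-θ₀) = t ^ (θ₁ - θ₀) * t ^ (-θ₁) := by
      rw [← Real.rpow_add ht]; congr 1; ring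
    rw [hρ t, h3, h4]
    field_simp
  rw [normK_eq_X0 A₀.N A₁.N θ₀ r₀ b₀, normR_eq_X1 A₀.N A₁.N θ₁ r₁ q₁ b₁ a₁]
  set V₀ : ℝ → ℝ := fun t => t ^ (-θ₀) * b₀ t with hV₀
  set V₁ : ℝ → ℝ := fun t => t ^ (-θ₁) * a₁ t with hV₁
  have outer : ∀ θ : ℝ, θ < 1 →
      EqN (normK (X0 A₀.N A₁.N r₀ V₀) (X1 A₀.N A₁.N r₁ q₁ β V₁) θ r a)
        (fun f => sl r (fun k : ℤ => ENNReal.ofReal (ρ ((2 : ℝ) ^ k) ^ (-θ) * a (ρ ((2 : ℝ) ^ k))) *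
          If A₀.N A₁.N r₀ V₀ f ((2 : ℝ) ^ k))) := by
    intro θ hθ
    have pθ : PW (-θ) (fun t => t ^ (-θ) * a t) := by
      simpa using (PW.pow (-θ)).mul pa
    have pw : PW (-θ * (θ₁ - θ₀)) (fun t => ρ t ^ (-θ) * a (ρ t)) := by
      simpa using (pρ.rpow (-θ)).mul (pa.comp pρ)
    rw [normK_eq_X0]
    obtain ⟨D, hD, hDb⟩ := Wk_dbl pθ (X0 A₀.N A₁.N r₀ V₀) (X1 A₀.N A₁.N r₁ q₁ β V₁)
    have e1 := EqN.disc hr hD _ hDb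
    have e2 := EqN.chg hr hD _ hDb hγ pρ
    have e3 := eq_K_If A₀ A₁ hq₁ hr₀ hr₁ hr (by linarith) (by linarith) (by linarith) (by linarith)
      pV₀ pV₁ hβ hΛ pρ hγ pw (by nlinarith) hΛs hid
    exact (e1.trans e2).trans e3
  refine ⟨fun θ hθ0 hθ1 => ?_, fun _ => ?_⟩
  · have pw : PW (-θ * (θ₁ - θ₀)) (fun t => ρ t ^ (-θ) * a (ρ t)) := by
      simpa using (pρ.rpow (-θ)).mul (pa.comp pρ)
    have e := (outer θ hθ1).trans (eq_If_W A₀.N A₁.N hr₀ hr pV₀ pw (by nlinarith))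
    obtain ⟨D, hD, hDb⟩ := Wk_dbl (pw.mul pV₀) A₀.N A₁.N
    have e' := e.trans (EqN.disc hr hD _ hDb).symm
    have key : (fun f => LqNorm r (Ioi 0) (itg r (Wk A₀.N A₁.N
        (fun t => ρ t ^ (-θ) * a (ρ t) * V₀ t) f))) =
        normK A₀.N A₁.N ((1 - θ) * θ₀ + θ * θ₁) r
          (fun t => b₀ t ^ (1 - θ) * c₁ t ^ θ * a (ρ t)) := by
      rw [normK_eq_X0]
      funext f
      refine LqNorm_congr r measurableSet_Ioi fun t ht => ?_
      have ht : (0 : ℝ) < t := ht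
      unfold itg
      congr 1
      unfold Wk
      beta_reduce
      congr 2
      have hb := pb₀.1 t ht
      have hc := pc.1 t ht
      have hp := Real.rpow_pos_of_pos ht (θ₁ - θ₀)
      have e1 : ρ t ^ (-θ) = t ^ (-θ * (θ₁ - θ₀)) * (b₀ t ^ (-θ) * c₁ t ^ θ) := by
        rw [hρ t, Real.mul_rpow hp.le (by positivity), ← Real.rpow_mul ht.le,
          Real.div_rpow hb.le hc.le, Real.rpow_neg hc.le, div_inv_eq_mul, mul_comm (θ₁ - θ₀)]
      have e2 : t ^ (-((1 - θ) * θ₀ + θ * θ₁)) = t ^ (-θ * (θ₁ - θ₀)) * t ^ (-θ₀) := by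
        rw [← Real.rpow_add ht]; congr 1; ring
      have e3 : b₀ t ^ (1 - θ) = b₀ t ^ (-θ) * b₀ t := by
        rw [sub_eq_neg_add, Real.rpow_add hb, Real.rpow_one]
      rw [e1, e2, e3, hV₀]
      ring
    rw [key] at e'
    exact e'.equivNorms
  · have e := outer 0 zero_lt_one
    obtain ⟨D, hD, hDb⟩ := (pa.comp pρ).dbl
    obtain ⟨D', hD', hDb'⟩ := If_dbl hr₀ pV₀ A₀.N A₁.N
    have e2 := EqN.disc hr (ENNReal.mul_ne_top hD hD')
      (fun f t => ENNReal.ofReal (a (ρ t)) * If A₀.N A₁.N r₀ V₀ f t) (fun f => hDb.mul (hDb' f))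
    simp only [neg_zero, Real.rpow_zero, one_mul] at e
    have e' := e.trans e2.symm
    have key : (fun f => LqNorm r (Ioi 0) (itg r (fun t => ENNReal.ofReal (a (ρ t)) *
        If A₀.N A₁.N r₀ V₀ f t))) =
        normL A₀.N A₁.N θ₀ r r₀ (fun t => b₀ t * a (ρ t)) b₀ := by
      funext f
      rw [normL_eq]
      refine LqNorm_congr r measurableSet_Ioi fun t ht => ?_
      unfold itg
      beta_reduce
      rw [mul_div_cancel_left₀ _ (pb₀.1 t ht).ne']
    rw [key] at e'
    exact e'.equivNorms

end
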